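/- arXiv:1711.02514 — 2 statements merged into one kernel-verified Lean document; each statement's English description precedes it below -/
import Mathlib

section
/- There exist a centrally symmetric convex octagon D₈ and a centrally symmetric convex decagon D₁₀ in the Euclidean plane, each of which admits a five-fold translative tiling of the plane but admits no k-fold translative tiling for any k ≤ 4; that is, τ(D₈) = 5 and τ(D₁₀) = 5. -/
open Pointwise

/-- `K + X` is a `k`-fold translative tiling of the plane: the translate multiset
`(x i)` is discrete, every point of the plane belongs to at least `k` of the translates
`K + x i`, and every point belongs to at most `k` of the translates `interior K + x i`
(multiplicity counted over the index set). -/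
def IsKFoldTranslativeTiling {ι : Type} (K : Set (ℝ × ℝ)) (x : ι → ℝ × ℝ) (k : ℕ) : Prop :=
  (∀ R : ℝ, {i : ι | ‖x i‖ ≤ R}.Finite) ∧
  (∀ p : ℝ × ℝ, ∃ s : Finset ι, k ≤ s.card ∧ ∀ i ∈ s, p - x i ∈ K) ∧
  (∀ p : ℝ × ℝ, ∀ s : Finset ι, (∀ i ∈ s, p - x i ∈ interior K) → s.card ≤ k)

/-- `P` is a (two-dimensional) convex polygon whose vertex set is the finite set `V`:
`P` is the convex hull of `V`, every element of `V` is an extreme point of `P`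
(so `V` is exactly the vertex set), and `P` has nonempty interior. -/
def IsConvexPolygon (P : Set (ℝ × ℝ)) (V : Finset (ℝ × ℝ)) : Prop :=
  P = convexHull ℝ (V : Set (ℝ × ℝ)) ∧
  (∀ v ∈ V, v ∈ Set.extremePoints ℝ P) ∧
  (interior P).Nonempty

/-- `P` is symmetric about some point `c`. -/
def IsCentrallySymmetric (P : Set (ℝ × ℝ)) : Prop :=
  ∃ c : ℝ × ℝ, ∀ p ∈ P, 2 • c - p ∈ P

/-- The segment `[a, b]` is an edge of the convex polygon `P` with vertex set `V`. -/
def IsEdge (P : Set (ℝ × ℝ)) (V : Finset (ℝ × ℝ)) (a b : ℝ × ℝ) : Prop :=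
  a ∈ V ∧ b ∈ V ∧ a ≠ b ∧ segment ℝ a b ⊆ frontier P


/-! ### Symmetric polygons given by strips -/

/-- Dot product on the plane. -/
def dotp (w p : ℝ × ℝ) : ℝ := w.1 * p.1 + w.2 * p.2

/-- Intersection of symmetric strips. -/
def spoly {m : ℕ} (w : Fin m → ℝ × ℝ) (h : Fin m → ℝ) : Set (ℝ × ℝ) :=
  {p | ∀ j, |dotp (w j) p| ≤ h j}

/-- A half-open strip condition: `s` is the derivative of the strip function. -/
def halfStrip (s h d : ℝ) : Prop :=
  (0 < s ∧ -h ≤ d ∧ d < h) ∨ (s < 0 ∧ -h < d ∧ d ≤ h)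

/-- Half-open version of the polygon, belonging to a direction `u`. -/
def hpoly {m : ℕ} (w : Fin m → ℝ × ℝ) (h : Fin m → ℝ) (u : ℝ × ℝ) : Set (ℝ × ℝ) :=
  {p | ∀ j, halfStrip (dotp (w j) u) (h j) (dotp (w j) p)}

lemma dotp_add (w p q : ℝ × ℝ) : dotp w (p + q) = dotp w p + dotp w q := by
  simp [dotp]; ring

lemma dotp_sub (w p q : ℝ × ℝ) : dotp w (p - q) = dotp w p - dotp w q := by
  simp [dotp]; ring

lemma dotp_neg (w p : ℝ × ℝ) : dotp w (-p) = -dotp w p := by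
  simp [dotp]; ring

lemma dotp_smul (w : ℝ × ℝ) (t : ℝ) (p : ℝ × ℝ) : dotp w (t • p) = t * dotp w p := by
  simp [dotp]; ring

lemma dotp_continuous (w : ℝ × ℝ) : Continuous (dotp w) := by
  unfold dotp; fun_prop

lemma dotp_self_pos {w : ℝ × ℝ} (hw : w ≠ 0) : 0 < dotp w w := by
  have : w.1 ≠ 0 ∨ w.2 ≠ 0 := by
    by_contra! hh
    exact hw (Prod.ext hh.1 hh.2)
  unfold dotp
  rcases this with h | h
  · have := mul_self_pos.2 h
    nlinarith [mul_self_nonneg w.2]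
  · have := mul_self_pos.2 h
    nlinarith [mul_self_nonneg w.1]

lemma halfStrip_neg {s h d : ℝ} : halfStrip (-s) h d ↔ halfStrip s h (-d) := by
  unfold halfStrip
  constructor
  · rintro (⟨h1, h2, h3⟩ | ⟨h1, h2, h3⟩)
    · right; refine ⟨?_, ?_, ?_⟩ <;> linarith
    · left; refine ⟨?_, ?_, ?_⟩ <;> linarith
  · rintro (⟨h1, h2, h3⟩ | ⟨h1, h2, h3⟩)
    · right; refine ⟨?_, ?_, ?_⟩ <;> linarith
    · left; refine ⟨?_, ?_, ?_⟩ <;> linarith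

lemma strict_subset_interior {m : ℕ} (w : Fin m → ℝ × ℝ) (h : Fin m → ℝ) (p : ℝ × ℝ)
    (hp : ∀ j, |dotp (w j) p| < h j) : p ∈ interior (spoly w h) := by
  have ho : IsOpen {p : ℝ × ℝ | ∀ j, |dotp (w j) p| < h j} := by
    rw [Set.ofPred_forall]
    refine isOpen_iInter_of_finite fun j => ?_
    exact isOpen_lt (dotp_continuous (w j)).abs continuous_const
  refine interior_maximal ?_ ho hp
  intro q hq j
  exact (hq j).le

lemma interior_strict {m : ℕ} (w : Fin m → ℝ × ℝ) (h : Fin m → ℝ) (hw : ∀ j, w j ≠ 0)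
    (p : ℝ × ℝ) (hp : p ∈ interior (spoly w h)) (j : Fin m) : |dotp (w j) p| < h j := by
  have hn : spoly w h ∈ nhds p := mem_interior_iff_mem_nhds.1 hp
  have hc1 : Filter.Tendsto (fun ε : ℝ => p + ε • w j) (nhds 0) (nhds p) := by
    have : Continuous (fun ε : ℝ => p + ε • w j) := by fun_prop
    simpa using this.tendsto 0
  have hc2 : Filter.Tendsto (fun ε : ℝ => p - ε • w j) (nhds 0) (nhds p) := by
    have : Continuous (fun ε : ℝ => p - ε • w j) := by fun_prop
    simpa using this.tendsto 0
  have h1 : ∀ᶠ ε in nhdsWithin (0 : ℝ) (Set.Ioi 0), p + ε • w j ∈ spoly w h :=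
    (hc1.eventually hn).filter_mono nhdsWithin_le_nhds
  have h2 : ∀ᶠ ε in nhdsWithin (0 : ℝ) (Set.Ioi 0), p - ε • w j ∈ spoly w h :=
    (hc2.eventually hn).filter_mono nhdsWithin_le_nhds
  obtain ⟨ε, ⟨he1, he2⟩, he3⟩ := ((h1.and h2).and self_mem_nhdsWithin).exists
  have he3 : 0 < ε := he3
  have hpos := mul_pos he3 (dotp_self_pos (hw j))
  have a1 := abs_le.1 (he1 j)
  have a2 := abs_le.1 (he2 j)
  rw [dotp_add, dotp_smul] at a1
  rw [dotp_sub, dotp_smul] at a2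
  rw [abs_lt]
  constructor <;> linarith [a1.1, a1.2, a2.1, a2.2]

lemma spoly_convex {m : ℕ} (w : Fin m → ℝ × ℝ) (h : Fin m → ℝ) : Convex ℝ (spoly w h) := by
  intro p hp q hq a b ha hb hab j
  have a1 := abs_le.1 (hp j)
  have a2 := abs_le.1 (hq j)
  rw [dotp_add, dotp_smul, dotp_smul, abs_le]
  have hb' : b = 1 - a := by linarith
  subst hb'
  constructor <;> nlinarith [a1.1, a1.2, a2.1, a2.2]

lemma spoly_symm {m : ℕ} (w : Fin m → ℝ × ℝ) (h : Fin m → ℝ) :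
    IsCentrallySymmetric (spoly w h) := by
  refine ⟨0, fun p hp j => ?_⟩
  have := hp j
  simpa [dotp_neg] using this

lemma mem_extreme {m : ℕ} (w : Fin m → ℝ × ℝ) (h : Fin m → ℝ) (v : ℝ × ℝ)
    (hv : v ∈ spoly w h) (i j : Fin m) (hi : |dotp (w i) v| = h i) (hj : |dotp (w j) v| = h j)
    (hd : (w i).1 * (w j).2 - (w i).2 * (w j).1 ≠ 0) :
    v ∈ Set.extremePoints ℝ (spoly w h) := by
  have key : ∀ i : Fin m, |dotp (w i) v| = h i → ∀ p ∈ spoly w h, ∀ q ∈ spoly w h,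
      v ∈ openSegment ℝ p q → dotp (w i) p = dotp (w i) v := by
    intro i hi p hp q hq hvv
    obtain ⟨a, b, ha, hb, hab, rfl⟩ := hvv
    have a1 := abs_le.1 (hp i)
    have a2 := abs_le.1 (hq i)
    rw [dotp_add, dotp_smul, dotp_smul] at hi ⊢
    have hb' : b = 1 - a := by linarith
    subst hb'
    rcases abs_choice (a * dotp (w i) p + (1 - a) * dotp (w i) q) with hh | hh
    · rw [hh] at hi
      nlinarith [a1.1, a1.2, a2.1, a2.2]
    · rw [hh] at hi
      nlinarith [a1.1, a1.2, a2.1, a2.2]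
  refine ⟨hv, ?_⟩
  intro p hp q hq hvv
  have e1 := key i hi p hp q hq hvv
  have e2 := key j hj p hp q hq hvv
  unfold dotp at e1 e2
  have x1 : ((w i).1 * (w j).2 - (w i).2 * (w j).1) * (p.1 - v.1) = 0 := by
    linear_combination (w j).2 * e1 - (w i).2 * e2
  have x2 : ((w i).1 * (w j).2 - (w i).2 * (w j).1) * (p.2 - v.2) = 0 := by
    linear_combination (w i).1 * e2 - (w j).1 * e1
  have y1 := (mul_eq_zero.1 x1).resolve_left hd
  have y2 := (mul_eq_zero.1 x2).resolve_left hd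
  exact Prod.ext (by linarith) (by linarith)

/-! ### Half-open counting -/

lemma eventually_add_mul_lt {d s c : ℝ} (hd : d < c) :
    ∀ᶠ ε in nhdsWithin (0 : ℝ) (Set.Ioi 0), d + ε * s < c := by
  have : Continuous (fun ε : ℝ => d + ε * s) := by fun_prop
  have ht : Filter.Tendsto (fun ε : ℝ => d + ε * s) (nhds 0) (nhds d) := by
    simpa using this.tendsto 0
  exact (ht.eventually (gt_mem_nhds hd)).filter_mono nhdsWithin_le_nhds

lemma halfStrip_eventually_pos {s h d : ℝ} (hh : 0 < h) (hs : 0 < s) :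
    ∀ᶠ ε in nhdsWithin (0 : ℝ) (Set.Ioi 0),
      (|d + ε * s| ≤ h → halfStrip s h d) ∧ (halfStrip s h d → |d + ε * s| < h) := by
  rcases lt_or_ge d (-h) with h1 | h1
  · filter_upwards [eventually_add_mul_lt (s := s) h1] with ε he
    refine ⟨fun ha => ?_, fun ha => ?_⟩
    · linarith [(abs_le.1 ha).1]
    · rcases ha with ha | ha <;> linarith [ha.1, ha.2.1]
  rcases lt_or_ge d h with h2 | h2
  · filter_upwards [eventually_add_mul_lt (s := s) h2, self_mem_nhdsWithin] with ε he he0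
    have := mul_pos (show (0 : ℝ) < ε from he0) hs
    refine ⟨fun ha => Or.inl ⟨hs, h1, h2⟩, fun ha => ?_⟩
    rw [abs_lt]
    constructor <;> linarith
  · filter_upwards [self_mem_nhdsWithin] with ε he0
    have := mul_pos (show (0 : ℝ) < ε from he0) hs
    refine ⟨fun ha => ?_, fun ha => ?_⟩
    · linarith [(abs_le.1 ha).2]
    · rcases ha with ha | ha <;> linarith [ha.1, ha.2.2]

lemma halfStrip_eventually {s h d : ℝ} (hh : 0 < h) (hs : s ≠ 0) :
    ∀ᶠ ε in nhdsWithin (0 : ℝ) (Set.Ioi 0),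
      (|d + ε * s| ≤ h → halfStrip s h d) ∧ (halfStrip s h d → |d + ε * s| < h) := by
  rcases lt_or_gt_of_ne hs with h1 | h1
  · have := halfStrip_eventually_pos (s := -s) (d := -d) hh (by linarith)
    filter_upwards [this] with ε he
    rw [halfStrip_neg, neg_neg] at he
    have e : -d + ε * -s = -(d + ε * s) := by ring
    rwa [e, abs_neg] at he
  · exact halfStrip_eventually_pos hh h1

lemma hpoly_eventually {m : ℕ} (w : Fin m → ℝ × ℝ) (h : Fin m → ℝ) (hh : ∀ j, 0 < h j)
    (u : ℝ × ℝ) (hu : ∀ j, dotp (w j) u ≠ 0) (q : ℝ × ℝ) :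
    ∀ᶠ ε in nhdsWithin (0 : ℝ) (Set.Ioi 0),
      (q + ε • u ∈ spoly w h → q ∈ hpoly w h u) ∧
      (q ∈ hpoly w h u → q + ε • u ∈ interior (spoly w h)) := by
  have := Filter.eventually_all.2
    fun j => halfStrip_eventually (s := dotp (w j) u) (d := dotp (w j) q) (hh j) (hu j)
  filter_upwards [this] with ε he
  refine ⟨fun ha j => (he j).1 ?_, fun ha => strict_subset_interior w h _ fun j => ?_⟩
  · have := ha j
    rwa [dotp_add, dotp_smul] at this
  · have := (he j).2 (ha j)
    rwa [dotp_add, dotp_smul]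

lemma halfStrip_abs {s h d : ℝ} (hs : halfStrip s h d) : |d| ≤ h := by
  rw [abs_le]
  rcases hs with hs | hs <;> exact ⟨by linarith [hs.2.1], by linarith [hs.2.2]⟩

lemma hpoly_subset {m : ℕ} (w : Fin m → ℝ × ℝ) (h : Fin m → ℝ) (u : ℝ × ℝ) :
    hpoly w h u ⊆ spoly w h := fun _ hp j => halfStrip_abs (hp j)

open Classical in
/-- In a `k`-fold tiling every half-open version covers each point exactly `k` times. -/
lemma count_hpoly {m : ℕ} (w : Fin m → ℝ × ℝ) (h : Fin m → ℝ) (hh : ∀ j, 0 < h j)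
    (R : ℝ) (hR : ∀ p ∈ spoly w h, ‖p‖ ≤ R)
    {ι : Type} (x : ι → ℝ × ℝ) (k : ℕ) (hT : IsKFoldTranslativeTiling (spoly w h) x k)
    (u : ℝ × ℝ) (hu : ∀ j, dotp (w j) u ≠ 0) (p : ℝ × ℝ) (F : Finset ι)
    (hF : ∀ i, ‖x i‖ ≤ ‖p‖ + R → i ∈ F) :
    ∑ i ∈ F, (if p - x i ∈ hpoly w h u then (1 : ℤ) else 0) = k := by
  obtain ⟨h1, h2, h3⟩ := hT
  set G : Set ι := {i : ι | ‖x i‖ ≤ ‖p‖ + R + ‖u‖} with hG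
  have hGf : G.Finite := h1 _
  have ev : ∀ᶠ ε in nhdsWithin (0 : ℝ) (Set.Ioi 0), ∀ i ∈ G,
      (p - x i + ε • u ∈ spoly w h → p - x i ∈ hpoly w h u) ∧
      (p - x i ∈ hpoly w h u → p - x i + ε • u ∈ interior (spoly w h)) :=
    (Filter.eventually_all_finite hGf).2 fun i _ => hpoly_eventually w h hh u hu (p - x i)
  have ev1 : ∀ᶠ ε in nhdsWithin (0 : ℝ) (Set.Ioi 0), ε < 1 :=
    (gt_mem_nhds (show (0 : ℝ) < 1 by norm_num)).filter_mono nhdsWithin_le_nhds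
  obtain ⟨ε, ⟨he, he1⟩, he0⟩ := ((ev.and ev1).and self_mem_nhdsWithin).exists
  have he0 : 0 < ε := he0
  have heq : ∀ i, p + ε • u - x i = p - x i + ε • u := fun i => by abel
  have inG : ∀ i, p + ε • u - x i ∈ spoly w h → i ∈ G := by
    intro i hi
    have n1 := hR _ hi
    have n2 : x i = p + ε • u - (p + ε • u - x i) := by abel
    have n3 : ‖ε • u‖ ≤ ‖u‖ := by
      rw [norm_smul, Real.norm_eq_abs, abs_of_pos he0]
      nlinarith [norm_nonneg u]
    change ‖x i‖ ≤ _
    rw [n2]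
    have n4 := norm_sub_le (p + ε • u) (p + ε • u - x i)
    have n5 := norm_add_le p (ε • u)
    linarith
  have inG' : ∀ i, p - x i ∈ hpoly w h u → i ∈ F ∧ i ∈ G := by
    intro i hi
    have n1 := hR _ (hpoly_subset w h u hi)
    have n2 : x i = p - (p - x i) := by abel
    have n4 := norm_sub_le p (p - x i)
    rw [← n2] at n4
    refine ⟨hF i (by linarith), ?_⟩
    change ‖x i‖ ≤ _
    linarith [norm_nonneg u]
  rw [Finset.sum_boole]
  norm_cast
  apply le_antisymm
  · apply h3 (p + ε • u)
    intro i hi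
    have hi := (Finset.mem_filter.1 hi).2
    rw [heq]
    exact (he i (inG' i hi).2).2 hi
  · obtain ⟨s, hs1, hs2⟩ := h2 (p + ε • u)
    refine hs1.trans (Finset.card_le_card ?_)
    intro i hi
    have hi2 := hs2 i hi
    have hi3 := inG i hi2
    rw [heq] at hi2
    have := (he i hi3).1 hi2
    exact Finset.mem_filter.2 ⟨(inG' i this).1, this⟩

/-! ### The edge equation -/

lemma halfStrip_congr {s s' h d : ℝ} (hs : 0 < s * s') : halfStrip s h d ↔ halfStrip s' h d := by
  unfold halfStrip
  rcases lt_trichotomy s 0 with h1 | h1 | h1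
  · have h2 : s' < 0 := by
      by_contra hc
      nlinarith
    simp [h1, h2, h1.not_gt, h2.not_gt]
  · simp [h1] at hs
  · have h2 : 0 < s' := by
      by_contra hc
      nlinarith
    simp [h1, h2, h1.not_gt, h2.not_gt]

lemma halfStrip_of_mem {α β h s : ℝ} (ha : |α| ≤ h) (hb : |β| ≤ h) (hne : α ≠ β)
    (h0 : 0 ≤ s) (h1 : s < 1) : halfStrip (β - α) h (α + s * (β - α)) := by
  have a1 := abs_le.1 ha
  have b1 := abs_le.1 hb
  rcases lt_or_gt_of_ne hne with hl | hl
  · left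
    refine ⟨by linarith, ?_, ?_⟩ <;> nlinarith [a1.1, a1.2, b1.1, b1.2]
  · right
    refine ⟨by linarith, ?_, ?_⟩ <;> nlinarith [a1.1, a1.2, b1.1, b1.2]

lemma nonneg_of_halfStrip {α β h s : ℝ} (ha : |α| = h) (hb : |β| ≤ h) (hne : α ≠ β)
    (hs : halfStrip (β - α) h (α + s * (β - α))) : 0 ≤ s := by
  have b1 := abs_le.1 hb
  by_contra! hc
  rcases abs_choice α with hh | hh <;> rw [hh] at ha <;> rcases hs with hs | hs
  · linarith [hs.1, b1.2]
  · nlinarith [hs.1, hs.2.2]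
  · nlinarith [hs.1, hs.2.1]
  · linarith [hs.1, b1.1]

lemma lt_one_of_halfStrip {α β h s : ℝ} (ha : |α| ≤ h) (hb : |β| = h) (hne : α ≠ β)
    (hs : halfStrip (β - α) h (α + s * (β - α))) : s < 1 := by
  have b1 := abs_le.1 ha
  by_contra! hc
  rcases abs_choice β with hh | hh <;> rw [hh] at hb <;> rcases hs with hs | hs
  · nlinarith [hs.1, hs.2.2]
  · linarith [hs.1, b1.2]
  · linarith [hs.1, b1.1]
  · nlinarith [hs.1, hs.2.1]

/-- Data of an edge `[a, b]` on the line `dotp (w i) = - h i`. -/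
structure EdgeData {m : ℕ} (w : Fin m → ℝ × ℝ) (h : Fin m → ℝ) (i : Fin m) (a b : ℝ × ℝ) :
    Prop where
  ha : dotp (w i) a = -h i
  hb : dotp (w i) b = -h i
  haP : a ∈ spoly w h
  hbP : b ∈ spoly w h
  hne : ∀ j, j ≠ i → dotp (w j) a ≠ dotp (w j) b
  ta : ∃ j, j ≠ i ∧ |dotp (w j) a| = h j
  tb : ∃ j, j ≠ i ∧ |dotp (w j) b| = h j

lemma EdgeData.symm {m : ℕ} {w : Fin m → ℝ × ℝ} {h : Fin m → ℝ} {i : Fin m} {a b : ℝ × ℝ}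
    (E : EdgeData w h i a b) : EdgeData w h i b a :=
  ⟨E.hb, E.ha, E.hbP, E.haP, fun j hj => (E.hne j hj).symm, E.tb, E.ta⟩

/-- The side conditions along an edge. -/
def sideCond {m : ℕ} (w : Fin m → ℝ × ℝ) (h : Fin m → ℝ) (i : Fin m) (e q : ℝ × ℝ) : Prop :=
  ∀ j, j ≠ i → halfStrip (dotp (w j) e) (h j) (dotp (w j) q)

lemma sideCond_neg {m : ℕ} {w : Fin m → ℝ × ℝ} {h : Fin m → ℝ} {i : Fin m} {e q : ℝ × ℝ} :
    sideCond w h i (-e) q ↔ sideCond w h i e (-q) := by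
  unfold sideCond
  simp only [dotp_neg, halfStrip_neg]

lemma EdgeData.side_iff {m : ℕ} {w : Fin m → ℝ × ℝ} {h : Fin m → ℝ} {i : Fin m} {a b : ℝ × ℝ}
    (E : EdgeData w h i a b) (s : ℝ) :
    sideCond w h i (b - a) (a + s • (b - a)) ↔ 0 ≤ s ∧ s < 1 := by
  unfold sideCond
  simp only [dotp_add, dotp_smul, dotp_sub]
  constructor
  · intro H
    obtain ⟨j, hj, hj2⟩ := E.ta
    obtain ⟨l, hl, hl2⟩ := E.tb
    exact ⟨nonneg_of_halfStrip hj2 (E.hbP j) (E.hne j hj) (H j hj),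
      lt_one_of_halfStrip (E.haP l) hl2 (E.hne l hl) (H l hl)⟩
  · rintro ⟨h0, h1⟩ j hj
    exact halfStrip_of_mem (E.haP j) (E.hbP j) (E.hne j hj) h0 h1

lemma EdgeData.ne {m : ℕ} {w : Fin m → ℝ × ℝ} {h : Fin m → ℝ} {i : Fin m} {a b : ℝ × ℝ}
    (E : EdgeData w h i a b) : b - a ≠ 0 := by
  intro hc
  obtain ⟨j, hj, _⟩ := E.ta
  apply E.hne j hj
  rw [sub_eq_zero.1 hc]

lemma EdgeData.param {m : ℕ} {w : Fin m → ℝ × ℝ} {h : Fin m → ℝ} {i : Fin m} {a b : ℝ × ℝ}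
    (E : EdgeData w h i a b) (hw : w i ≠ 0) (q : ℝ × ℝ) (hq : dotp (w i) q = -h i) :
    ∃ s : ℝ, q = a + s • (b - a) := by
  have hr := dotp_self_pos E.ne
  set r := b - a with hrdef
  have h1 : dotp (w i) r = 0 := by rw [hrdef, dotp_sub, E.ha, E.hb]; ring
  set t := q - a with htdef
  have h2 : dotp (w i) t = 0 := by rw [htdef, dotp_sub, E.ha, hq]; ring
  have hc : t.1 * r.2 - t.2 * r.1 = 0 := by
    have hw' := dotp_self_pos hw
    have : dotp (w i) (w i) * (t.1 * r.2 - t.2 * r.1) = 0 := by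
      unfold dotp at h1 h2 ⊢
      linear_combination ((w i).1 * r.2 - (w i).2 * r.1) * h2 -
        ((w i).1 * t.2 - (w i).2 * t.1) * h1
    exact (mul_eq_zero.1 this).resolve_left hw'.ne'
  refine ⟨dotp t r / dotp r r, ?_⟩
  have hq' : q = a + t := by rw [htdef]; abel
  rw [hq']
  congr 1
  have hr' := hr.ne'
  ext
  · simp only [Prod.smul_fst, smul_eq_mul]
    field_simp
    unfold dotp
    linear_combination r.2 * hc
  · simp only [Prod.smul_snd, smul_eq_mul]
    field_simp
    unfold dotp
    linear_combination -r.1 * hc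

open Classical in
lemma EdgeData.side_sub {m : ℕ} {w : Fin m → ℝ × ℝ} {h : Fin m → ℝ} {i : Fin m} {a b : ℝ × ℝ}
    (E : EdgeData w h i a b) (hw : w i ≠ 0) (q : ℝ × ℝ) (hq : dotp (w i) q = -h i) :
    (if sideCond w h i (b - a) q then (1 : ℤ) else 0) -
      (if sideCond w h i (-(b - a)) q then 1 else 0) =
    (if q = a then 1 else 0) - (if q = b then 1 else 0) := by
  obtain ⟨s, rfl⟩ := E.param hw q hq
  have h1 := E.side_iff s
  have h2 := E.symm.side_iff (1 - s)
  have e1 : b + (1 - s) • (a - b) = a + s • (b - a) := by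
    ext <;> simp <;> ring
  have e2 : -(b - a) = a - b := by abel
  rw [e1] at h2
  rw [h1, e2, h2]
  have h3 : a + s • (b - a) = a ↔ s = 0 := by
    simp [E.ne]
  have h4 : a + s • (b - a) = b ↔ s = 1 := by
    rw [← e1]
    have : a - b ≠ 0 := E.symm.ne
    simp only [add_eq_left, smul_eq_zero, this, or_false]
    constructor <;> intro <;> linarith
  simp only [h3, h4]
  rcases lt_trichotomy s 0 with c | c | c
  · have c1 : ¬ (0 ≤ s ∧ s < 1) := by intro hh; linarith [hh.1]
    have c2 : ¬ (0 ≤ 1 - s ∧ 1 - s < 1) := by intro hh; linarith [hh.2]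
    have c3 : s ≠ 0 := by linarith
    have c4 : s ≠ 1 := by linarith
    rw [if_neg c1, if_neg c2, if_neg c3, if_neg c4]
  · subst c; simp
  · rcases lt_trichotomy s 1 with d | d | d
    · have c1 : (0 ≤ s ∧ s < 1) := ⟨c.le, d⟩
      have c2 : (0 ≤ 1 - s ∧ 1 - s < 1) := ⟨by linarith, by linarith⟩
      rw [if_pos c1, if_pos c2, if_neg c.ne', if_neg d.ne]
      norm_num
    · subst d; simp
    · have c1 : ¬ (0 ≤ s ∧ s < 1) := by intro hh; linarith [hh.2]
      have c2 : ¬ (0 ≤ 1 - s ∧ 1 - s < 1) := by intro hh; linarith [hh.1]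
      rw [if_neg c1, if_neg c2, if_neg c.ne', if_neg d.ne']

lemma hpoly_iff_pos {m : ℕ} {w : Fin m → ℝ × ℝ} {h : Fin m → ℝ} {i : Fin m} {e u q : ℝ × ℝ}
    (hu : ∀ j, j ≠ i → 0 < dotp (w j) u * dotp (w j) e) (hi : 0 < dotp (w i) u) :
    q ∈ hpoly w h u ↔ sideCond w h i e q ∧ -h i ≤ dotp (w i) q ∧ dotp (w i) q < h i := by
  constructor
  · intro H
    refine ⟨fun j hj => (halfStrip_congr (hu j hj)).1 (H j), ?_⟩
    rcases H i with H | H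
    · exact H.2
    · linarith [H.1]
  · rintro ⟨H1, H2⟩ j
    by_cases hj : j = i
    · subst hj
      exact Or.inl ⟨hi, H2⟩
    · exact (halfStrip_congr (hu j hj)).2 (H1 j hj)

lemma hpoly_iff_neg {m : ℕ} {w : Fin m → ℝ × ℝ} {h : Fin m → ℝ} {i : Fin m} {e u q : ℝ × ℝ}
    (hu : ∀ j, j ≠ i → 0 < dotp (w j) u * dotp (w j) e) (hi : dotp (w i) u < 0) :
    q ∈ hpoly w h u ↔ sideCond w h i e q ∧ -h i < dotp (w i) q ∧ dotp (w i) q ≤ h i := by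
  constructor
  · intro H
    refine ⟨fun j hj => (halfStrip_congr (hu j hj)).1 (H j), ?_⟩
    rcases H i with H | H
    · linarith [H.1]
    · exact H.2
  · rintro ⟨H1, H2⟩ j
    by_cases hj : j = i
    · subst hj
      exact Or.inr ⟨hi, H2⟩
    · exact (halfStrip_congr (hu j hj)).2 (H1 j hj)

open Classical in
/-- The four-term identity behind the edge equation. -/
lemma EdgeData.four_term {m : ℕ} {w : Fin m → ℝ × ℝ} {h : Fin m → ℝ} {i : Fin m} {a b : ℝ × ℝ}
    (E : EdgeData w h i a b) (hw : w i ≠ 0) (hh : 0 < h i) (u1 u2 : ℝ × ℝ)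
    (h1 : ∀ j, j ≠ i → 0 < dotp (w j) u1 * dotp (w j) (b - a)) (h1i : 0 < dotp (w i) u1)
    (h2 : ∀ j, j ≠ i → 0 < dotp (w j) u2 * dotp (w j) (b - a)) (h2i : dotp (w i) u2 < 0)
    (q : ℝ × ℝ) :
    (if q ∈ hpoly w h u1 then (1 : ℤ) else 0) - (if q ∈ hpoly w h u2 then 1 else 0)
      - (if q ∈ hpoly w h (-u2) then 1 else 0) + (if q ∈ hpoly w h (-u1) then 1 else 0) =
    (if q = a then 1 else 0) - (if q = b then 1 else 0) + (if q = -a then 1 else 0)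
      - (if q = -b then 1 else 0) := by
  rw [hpoly_iff_pos h1 h1i, hpoly_iff_neg h2 h2i,
    hpoly_iff_pos (u := -u2) (e := -(b - a))
      (fun j hj => by simpa only [dotp_neg, neg_mul_neg] using h2 j hj)
      (by rw [dotp_neg]; linarith),
    hpoly_iff_neg (u := -u1) (e := -(b - a))
      (fun j hj => by simpa only [dotp_neg, neg_mul_neg] using h1 j hj)
      (by rw [dotp_neg]; linarith)]
  by_cases d1 : dotp (w i) q = -h i
  · have n1 : q ≠ -a := by
      rintro rfl
      rw [dotp_neg, E.ha] at d1; linarith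
    have n2 : q ≠ -b := by
      rintro rfl
      rw [dotp_neg, E.hb] at d1; linarith
    have := E.side_sub hw q d1
    rw [if_neg n1, if_neg n2, d1]
    have e1 : -h i < h i := by linarith
    simp only [le_refl, e1, and_true, lt_irrefl, false_and, and_false, if_false]
    linarith
  by_cases d2 : dotp (w i) q = h i
  · have n1 : q ≠ a := by
      rintro rfl
      exact d1 E.ha
    have n2 : q ≠ b := by
      rintro rfl
      exact d1 E.hb
    have := E.side_sub hw (-q) (by rw [dotp_neg, d2])
    rw [sideCond_neg, neg_neg] at this
    simp only [neg_eq_iff_eq_neg] at this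
    rw [if_neg n1, if_neg n2, d2]
    have e1 : -h i < h i := by linarith
    have e2 : sideCond w h i (b - a) (-q) ↔ sideCond w h i (-(b - a)) q := sideCond_neg.symm
    rw [e2] at this
    simp only [le_refl, e1, and_true, lt_irrefl, and_false, if_false]
    linarith
  · have n1 : q ≠ a := by
      rintro rfl
      exact d1 E.ha
    have n2 : q ≠ b := by
      rintro rfl
      exact d1 E.hb
    have n3 : q ≠ -a := by
      rintro rfl
      rw [dotp_neg, E.ha] at d2; simp at d2
    have n4 : q ≠ -b := by
      rintro rfl
      rw [dotp_neg, E.hb] at d2; simp at d2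
    rw [if_neg n1, if_neg n2, if_neg n3, if_neg n4]
    have e1 : (-h i ≤ dotp (w i) q ∧ dotp (w i) q < h i) ↔
        (-h i < dotp (w i) q ∧ dotp (w i) q ≤ h i) := by
      constructor
      · rintro ⟨x, y⟩
        exact ⟨lt_of_le_of_ne x (Ne.symm d1), y.le⟩
      · rintro ⟨x, y⟩
        exact ⟨x.le, lt_of_le_of_ne y d2⟩
    rw [e1]
    ring

/-- Multiplicity function of the translate family. -/
noncomputable def mult {ι : Type} (x : ι → ℝ × ℝ) (y : ℝ × ℝ) : ℤ := ({i | x i = y} : Set ι).ncard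

open Classical in
lemma mult_eq_sum {ι : Type} (x : ι → ℝ × ℝ) (y : ℝ × ℝ) (F : Finset ι)
    (hF : ∀ i, x i = y → i ∈ F) : mult x y = ∑ i ∈ F, if x i = y then (1 : ℤ) else 0 := by
  rw [Finset.sum_boole, mult]
  congr 1
  rw [← Set.ncard_coe_finset]
  congr 1
  ext i
  simp only [Finset.coe_filter, Set.mem_ofPred_eq]
  exact ⟨fun hi => ⟨hF i hi, hi⟩, fun hi => hi.2⟩

/-- The edge equation. -/
lemma edge_equation {m : ℕ} (w : Fin m → ℝ × ℝ) (h : Fin m → ℝ) (hw : ∀ j, w j ≠ 0)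
    (hh : ∀ j, 0 < h j) (R : ℝ) (hR : ∀ p ∈ spoly w h, ‖p‖ ≤ R)
    {ι : Type} (x : ι → ℝ × ℝ) (k : ℕ) (hT : IsKFoldTranslativeTiling (spoly w h) x k)
    (i : Fin m) (a b : ℝ × ℝ) (E : EdgeData w h i a b) (p : ℝ × ℝ) :
    mult x (p - a) - mult x (p - b) + mult x (p + a) - mult x (p + b) = 0 := by
  classical
  set e := b - a with he
  have hei : dotp (w i) e = 0 := by rw [he, dotp_sub, E.ha, E.hb]; ring
  have hej : ∀ j, j ≠ i → dotp (w j) e ≠ 0 := by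
    intro j hj
    rw [he, dotp_sub]
    exact fun hc => E.hne j hj (by linarith)
  have ev : ∀ᶠ ε in nhdsWithin (0 : ℝ) (Set.Ioi 0), ∀ j, j ≠ i →
      0 < dotp (w j) (e + ε • w i) * dotp (w j) e ∧
      0 < dotp (w j) (e - ε • w i) * dotp (w j) e := by
    refine Filter.eventually_all.2 fun j => ?_
    by_cases hj : j = i
    · exact Filter.Eventually.of_forall fun _ hc => absurd hj hc
    have hp := mul_self_pos.2 (hej j hj)
    have e1 := eventually_add_mul_lt (d := -(dotp (w j) e * dotp (w j) e))
      (s := -(dotp (w j) (w i) * dotp (w j) e)) (c := 0) (by linarith)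
    have e2 := eventually_add_mul_lt (d := -(dotp (w j) e * dotp (w j) e))
      (s := (dotp (w j) (w i) * dotp (w j) e)) (c := 0) (by linarith)
    filter_upwards [e1, e2] with ε h1 h2 _
    rw [dotp_add, dotp_sub _ e, dotp_smul]
    constructor <;> linarith
  obtain ⟨ε, he1, he0⟩ := (ev.and self_mem_nhdsWithin).exists
  have he0 : 0 < ε := he0
  have hpos := mul_pos he0 (dotp_self_pos (hw i))
  set u1 := e + ε • w i with hu1
  set u2 := e - ε • w i with hu2
  have h1i : 0 < dotp (w i) u1 := by rw [hu1, dotp_add, dotp_smul, hei]; linarith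
  have h2i : dotp (w i) u2 < 0 := by rw [hu2, dotp_sub, dotp_smul, hei]; linarith
  have n1 : ∀ j, dotp (w j) u1 ≠ 0 := by
    intro j
    by_cases hj : j = i
    · subst hj; exact h1i.ne'
    · exact left_ne_zero_of_mul (he1 j hj).1.ne'
  have n2 : ∀ j, dotp (w j) u2 ≠ 0 := by
    intro j
    by_cases hj : j = i
    · subst hj; exact h2i.ne
    · exact left_ne_zero_of_mul (he1 j hj).2.ne'
  have n1' : ∀ j, dotp (w j) (-u1) ≠ 0 := fun j => by rw [dotp_neg]; exact neg_ne_zero.2 (n1 j)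
  have n2' : ∀ j, dotp (w j) (-u2) ≠ 0 := fun j => by rw [dotp_neg]; exact neg_ne_zero.2 (n2 j)
  set F : Finset ι := (hT.1 (‖p‖ + R)).toFinset with hFdef
  have hF : ∀ i, ‖x i‖ ≤ ‖p‖ + R → i ∈ F := fun i hi => by simpa [hFdef] using hi
  have c1 := count_hpoly w h hh R hR x k hT u1 n1 p F hF
  have c2 := count_hpoly w h hh R hR x k hT u2 n2 p F hF
  have c3 := count_hpoly w h hh R hR x k hT (-u2) n2' p F hF
  have c4 := count_hpoly w h hh R hR x k hT (-u1) n1' p F hF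
  have hsum : ∑ i ∈ F, ((if p - x i = a then (1 : ℤ) else 0) - (if p - x i = b then 1 else 0)
      + (if p - x i = -a then 1 else 0) - (if p - x i = -b then 1 else 0)) = 0 := by
    rw [Finset.sum_congr rfl fun l _ => (E.four_term (hw i) (hh i) u1 u2
      (fun j hj => (he1 j hj).1) h1i (fun j hj => (he1 j hj).2) h2i (p - x l)).symm]
    rw [Finset.sum_add_distrib, Finset.sum_sub_distrib, Finset.sum_sub_distrib, c1, c2, c3, c4]
    ring
  have hna := hR a E.haP
  have hnb := hR b E.hbP
  have m1 : mult x (p - a) = ∑ i ∈ F, if p - x i = a then (1 : ℤ) else 0 := by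
    rw [mult_eq_sum x (p - a) F]
    · refine Finset.sum_congr rfl fun l _ => ?_
      congr 1
      rw [eq_iff_iff]
      constructor
      · intro hx; rw [hx]; abel
      · intro hx; rw [← hx]; abel
    · intro l hl
      apply hF
      rw [hl]
      linarith [norm_sub_le p a]
  have m2 : mult x (p - b) = ∑ i ∈ F, if p - x i = b then (1 : ℤ) else 0 := by
    rw [mult_eq_sum x (p - b) F]
    · refine Finset.sum_congr rfl fun l _ => ?_
      congr 1
      rw [eq_iff_iff]
      constructor
      · intro hx; rw [hx]; abel
      · intro hx; rw [← hx]; abel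
    · intro l hl
      apply hF
      rw [hl]
      linarith [norm_sub_le p b]
  have m3 : mult x (p + a) = ∑ i ∈ F, if p - x i = -a then (1 : ℤ) else 0 := by
    rw [mult_eq_sum x (p + a) F]
    · refine Finset.sum_congr rfl fun l _ => ?_
      congr 1
      rw [eq_iff_iff]
      constructor
      · intro hx; rw [hx]; abel
      · intro hx
        have : a = -(p - x l) := by rw [hx]; abel
        rw [this]; abel
    · intro l hl
      apply hF
      rw [hl]
      linarith [norm_add_le p a]
  have m4 : mult x (p + b) = ∑ i ∈ F, if p - x i = -b then (1 : ℤ) else 0 := by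
    rw [mult_eq_sum x (p + b) F]
    · refine Finset.sum_congr rfl fun l _ => ?_
      congr 1
      rw [eq_iff_iff]
      constructor
      · intro hx; rw [hx]; abel
      · intro hx
        have : b = -(p - x l) := by rw [hx]; abel
        rw [this]; abel
    · intro l hl
      apply hF
      rw [hl]
      linarith [norm_add_le p b]
  rw [Finset.sum_sub_distrib, Finset.sum_add_distrib, Finset.sum_sub_distrib] at hsum
  rw [m1, m2, m3, m4]
  exact hsum

/-! ### Difference equations for locally finite bounded functions -/

/-- The difference operator. -/
def dif (v : ℝ × ℝ) (g : ℝ × ℝ → ℤ) : ℝ × ℝ → ℤ := fun p => g (p + v) - g p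

/-- Bounded functions with locally finite support. -/
def GoodFun (g : ℝ × ℝ → ℤ) : Prop :=
  (∃ B : ℤ, ∀ p, |g p| ≤ B) ∧ ∀ R : ℝ, {p | ‖p‖ ≤ R ∧ g p ≠ 0}.Finite

lemma GoodFun.dif {g : ℝ × ℝ → ℤ} (hg : GoodFun g) (v : ℝ × ℝ) : GoodFun (dif v g) := by
  obtain ⟨⟨B, hB⟩, hf⟩ := hg
  refine ⟨⟨B + B, fun p => ?_⟩, fun R => ?_⟩
  · have h1 := abs_le.1 (hB (p + v))
    have h2 := abs_le.1 (hB p)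
    rw [abs_le]
    unfold _root_.dif
    constructor <;> linarith [h1.1, h1.2, h2.1, h2.2]
  · have h1 : (Set.image (fun q => q - v) {p | ‖p‖ ≤ R + ‖v‖ ∧ g p ≠ 0}).Finite := (hf _).image _
    refine (h1.union (hf R)).subset ?_
    rintro p ⟨hp, hp2⟩
    by_cases h0 : g p = 0
    · left
      refine ⟨p + v, ⟨?_, ?_⟩, by simp⟩
      · linarith [norm_add_le p v]
      · intro hc
        apply hp2
        simp [_root_.dif, h0, hc]
    · right
      exact ⟨hp, h0⟩

lemma dif_comm (u v : ℝ × ℝ) (g : ℝ × ℝ → ℤ) : dif u (dif v g) = dif v (dif u g) := by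
  funext p
  simp only [dif]
  rw [add_right_comm p u v]
  ring

lemma dif_zero (v : ℝ × ℝ) : dif v (fun _ => 0) = fun _ => 0 := by
  funext p; simp [dif]

/-- The group of periods. -/
def periods (g : ℝ × ℝ → ℤ) : AddSubgroup (ℝ × ℝ) where
  carrier := {v | ∀ p, g (p + v) = g p}
  zero_mem' := by intro p; simp
  add_mem' := by
    intro a b ha hb p
    rw [← add_assoc, hb, ha]
  neg_mem' := by
    intro a ha p
    have := ha (p + -a)
    rw [neg_add_cancel_right] at this
    exact this.symm

lemma mem_periods {g : ℝ × ℝ → ℤ} {v : ℝ × ℝ} : v ∈ periods g ↔ dif v g = fun _ => 0 := by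
  constructor
  · intro h
    funext p
    have : g (p + v) = g p := h p
    simp [dif, this]
  · intro h p
    have := congrFun h p
    simp only [dif] at this
    linarith

/-- A bounded function with vanishing second difference is periodic. -/
lemma dif_dif_eq_zero {g : ℝ × ℝ → ℤ} (hg : GoodFun g) (v : ℝ × ℝ)
    (h : dif v (dif v g) = fun _ => 0) : dif v g = fun _ => 0 := by
  obtain ⟨⟨B, hB⟩, _⟩ := hg
  funext p
  have h1 : ∀ n : ℕ, dif v g (p + (n : ℝ) • v) = dif v g p := by
    intro n
    induction n with
    | zero => simp
    | succ n ih =>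
      rw [← ih]
      have := congrFun h (p + (n : ℝ) • v)
      rw [dif] at this
      have e : p + ((n + 1 : ℕ) : ℝ) • v = p + (n : ℝ) • v + v := by
        push_cast
        rw [add_smul, one_smul, add_assoc]
      rw [e]
      linarith
  have h2 : ∀ n : ℕ, g (p + (n : ℝ) • v) = g p + n * dif v g p := by
    intro n
    induction n with
    | zero => simp
    | succ n ih =>
      have := h1 n
      rw [dif] at this
      have e : p + ((n + 1 : ℕ) : ℝ) • v = p + (n : ℝ) • v + v := by
        push_cast
        rw [add_smul, one_smul, add_assoc]
      rw [e]
      push_cast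
      linarith
  by_contra hd
  have hd : dif v g p ≠ 0 := hd
  have hB0 : 0 ≤ B := (abs_nonneg _).trans (hB p)
  have h3 := h2 (2 * B + 1).toNat
  have h4 : (((2 * B + 1).toNat : ℕ) : ℤ) = 2 * B + 1 := Int.toNat_of_nonneg (by linarith)
  rw [h4] at h3
  have h5 := abs_le.1 (hB (p + (((2 * B + 1).toNat : ℕ) : ℝ) • v))
  have h6 := abs_le.1 (hB p)
  rcases lt_or_gt_of_ne hd with hd | hd
  · have : dif v g p ≤ -1 := by linarith
    nlinarith [h5.1, h6.2]
  · have : 1 ≤ dif v g p := by linarith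
    nlinarith [h5.2, h6.1]

lemma zero_of_periods {g : ℝ × ℝ → ℤ} (hg : GoodFun g) {c : ℝ} (hc : Irrational c)
    (n m r : ℤ) (hn : n ≠ 0) (hm : m ≠ 0) (h1 : ((n : ℝ), (0 : ℝ)) ∈ periods g)
    (h2 : (m * c + r, (0 : ℝ)) ∈ periods g) : g = fun _ => 0 := by
  set H : AddSubgroup ℝ := (periods g).comap (AddMonoidHom.inl ℝ ℝ) with hH
  have hirr : Irrational ((m * c + r) / (n : ℝ)) :=
    ((hc.intCast_mul hm).add_intCast r).div_intCast hn
  have hd := dense_addSubgroupClosure_pair_iff.2 hirr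
  have hsub : AddSubgroup.closure {m * c + r, (n : ℝ)} ≤ H := by
    rw [AddSubgroup.closure_le]
    rintro y (rfl | rfl)
    · exact h2
    · exact h1
  have hd : Dense (H : Set ℝ) := hd.mono hsub
  funext p
  by_contra hp
  have hp : g p ≠ 0 := hp
  have hfin : {r : ℝ | r ∈ Set.Ioo (0 : ℝ) 1 ∧ r ∈ H}.Finite := by
    have hf := hg.2 (‖p‖ + 1)
    refine Set.Finite.of_finite_image (f := fun r : ℝ => p + (r, (0 : ℝ))) (hf.subset ?_) ?_
    · rintro _ ⟨r, ⟨hr, hrH⟩, rfl⟩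
      refine ⟨?_, ?_⟩
      · have e : ‖(r, (0 : ℝ))‖ ≤ 1 := by
          simp only [Prod.norm_mk, norm_zero, sup_le_iff, zero_le_one, and_true]
          rw [Real.norm_eq_abs, abs_of_pos hr.1]
          exact hr.2.le
        linarith [norm_add_le p (r, (0 : ℝ))]
      · have : g (p + (r, (0 : ℝ))) = g p := hrH p
        change g (p + (r, (0 : ℝ))) ≠ 0
        rw [this]; exact hp
    · intro a _ b _ hab
      have := congrArg Prod.fst (add_left_cancel hab)
      exact this
  have hd2 := hd.diff_finite hfin
  obtain ⟨y, hy1, hy2⟩ := hd2.exists_mem_open (isOpen_Ioo (a := (0 : ℝ)) (b := 1)) ⟨1 / 2, by norm_num, by norm_num⟩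
  exact hy1.2 ⟨hy2, hy1.1⟩

/-- The claim handled by the case tree: a difference `dif l g'` killed by the differences along
`S` and by the products of differences listed in `W` vanishes. -/
def TreeClaim (l : ℝ × ℝ) (S : List (ℝ × ℝ)) (W : List ((ℝ × ℝ) × (ℝ × ℝ))) : Prop :=
  ∀ g : ℝ × ℝ → ℤ, GoodFun g → (∀ v ∈ S, v ∈ periods (dif l g)) →
    (∀ q ∈ W, dif q.1 (dif q.2 (dif l g)) = fun _ => 0) → dif l g = fun _ => 0

lemma TreeClaim.node {l : ℝ × ℝ} {S : List (ℝ × ℝ)} {W : List ((ℝ × ℝ) × (ℝ × ℝ))}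
    (a b : ℝ × ℝ) (h1 : TreeClaim l (a :: S) W) (h2 : TreeClaim l (b :: S) W) :
    TreeClaim l S ((a, b) :: W) := by
  intro g hg hS hW
  have hab : dif a (dif b (dif l g)) = fun _ => 0 := hW (a, b) (by simp)
  have hz : dif l (dif b g) = fun _ => 0 := by
    apply h1 (dif b g) (hg.dif b)
    · intro v hv
      rw [mem_periods, dif_comm l b]
      rcases List.mem_cons.1 hv with rfl | hv
      · exact hab
      · rw [dif_comm v b, mem_periods.1 (hS v hv), dif_zero]
    · intro q hq
      rw [dif_comm l b, dif_comm q.2 b, dif_comm q.1 b, hW q (List.mem_cons_of_mem _ hq), dif_zero]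
  apply h2 g hg
  · intro v hv
    rcases List.mem_cons.1 hv with rfl | hv
    · rw [mem_periods, dif_comm, hz]
    · exact hS v hv
  · intro q hq
    exact hW q (List.mem_cons_of_mem _ hq)

lemma TreeClaim.leaf {l : ℝ × ℝ} {S : List (ℝ × ℝ)} {W : List ((ℝ × ℝ) × (ℝ × ℝ))} {c : ℝ}
    (hc : Irrational c) (n m r : ℤ) (hn : n ≠ 0) (hm : m ≠ 0)
    (h : ∀ H : AddSubgroup (ℝ × ℝ), (∀ v ∈ S, v ∈ H) →
      ((n : ℝ), (0 : ℝ)) ∈ H ∧ (m * c + r, (0 : ℝ)) ∈ H) : TreeClaim l S W := by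
  intro g hg hS _
  obtain ⟨h1, h2⟩ := h _ hS
  exact zero_of_periods (hg.dif l) hc n m r hn hm h1 h2

lemma TreeClaim.goodLeaf {l : ℝ × ℝ} {S : List (ℝ × ℝ)} {W : List ((ℝ × ℝ) × (ℝ × ℝ))}
    (h : ∀ H : AddSubgroup (ℝ × ℝ), (∀ v ∈ S, v ∈ H) → l ∈ H) : TreeClaim l S W := by
  intro g hg hS _
  exact dif_dif_eq_zero hg l (mem_periods.1 (h _ hS))

lemma mult_good {m : ℕ} (w : Fin m → ℝ × ℝ) (h : Fin m → ℝ) (hh : ∀ j, 0 < h j)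
    {ι : Type} (x : ι → ℝ × ℝ) (k : ℕ) (hT : IsKFoldTranslativeTiling (spoly w h) x k) :
    GoodFun (mult x) := by
  obtain ⟨h1, h2, h3⟩ := hT
  have hfin : ∀ y, {i | x i = y}.Finite := fun y =>
    (h1 ‖y‖).subset fun i hi => by
      have hi : x i = y := hi
      change ‖x i‖ ≤ ‖y‖
      rw [hi]
  refine ⟨⟨k, fun y => ?_⟩, fun R => ?_⟩
  · have h0 : (0 : ℝ × ℝ) ∈ interior (spoly w h) := by
      apply strict_subset_interior
      intro j
      simpa [dotp] using hh j
    have := h3 y (hfin y).toFinset (by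
      intro i hi
      have : x i = y := by simpa using hi
      rw [this, sub_self]
      exact h0)
    unfold mult
    rw [Set.ncard_eq_toFinset_card _ (hfin y)]
    simpa using this
  · refine ((h1 R).image x).subset ?_
    rintro y ⟨hy, hy2⟩
    have : {i | x i = y}.Nonempty := by
      by_contra hc
      rw [Set.not_nonempty_iff_eq_empty] at hc
      apply hy2
      simp [mult, hc]
    obtain ⟨i, hi⟩ := this
    have hi : x i = y := hi
    exact ⟨i, by change ‖x i‖ ≤ R; rw [hi]; exact hy, hi⟩

/-- The edge equation as a difference equation. -/
lemma edge_dif {m : ℕ} (w : Fin m → ℝ × ℝ) (h : Fin m → ℝ) (hw : ∀ j, w j ≠ 0)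
    (hh : ∀ j, 0 < h j) (R : ℝ) (hR : ∀ p ∈ spoly w h, ‖p‖ ≤ R)
    {ι : Type} (x : ι → ℝ × ℝ) (k : ℕ) (hT : IsKFoldTranslativeTiling (spoly w h) x k)
    (i : Fin m) (a b e t : ℝ × ℝ) (E : EdgeData w h i a b) (he : e = b - a) (ht : t = a + b) :
    dif e (dif t (mult x)) = fun _ => 0 := by
  funext q
  have := edge_equation w h hw hh R hR x k hT i a b E (q + b)
  simp only [dif]
  have e1 : q + e + t = q + b + b := by rw [he, ht]; abel
  have e2 : q + e = q + b - a := by rw [he]; abel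
  have e3 : q + t = q + b + a := by rw [ht]; abel
  have e4 : q = q + b - b := by abel
  rw [e1, e2, e3]
  rw [← e4] at this
  linarith

/-- From periodicity under `ℤ²` to at least five-fold covering. -/
lemma five_le {m : ℕ} (w : Fin m → ℝ × ℝ) (h : Fin m → ℝ)
    {ι : Type} (x : ι → ℝ × ℝ) (k : ℕ) (hk : 0 < k)
    (hT : IsKFoldTranslativeTiling (spoly w h) x k)
    (hp1 : ((1 : ℝ), (0 : ℝ)) ∈ periods (mult x)) (hp2 : ((0 : ℝ), (1 : ℝ)) ∈ periods (mult x))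
    (q : ℝ × ℝ) (z : Fin 5 → ℤ × ℤ) (hz : Function.Injective z)
    (hzP : ∀ n, ∀ j, |dotp (w j) (q - (((z n).1 : ℝ), ((z n).2 : ℝ)))| < h j) : 5 ≤ k := by
  classical
  obtain ⟨s, hs, _⟩ := hT.2.1 0
  obtain ⟨i0, _⟩ : s.Nonempty := Finset.card_pos.1 (by omega)
  have hper : ∀ a b : ℤ, ((a : ℝ), (b : ℝ)) ∈ periods (mult x) := by
    intro a b
    have := (periods (mult x)).add_mem ((periods (mult x)).zsmul_mem hp1 a)
      ((periods (mult x)).zsmul_mem hp2 b)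
    simpa using this
  have hpos : mult x (x i0) ≠ 0 := by
    have hf : {i | x i = x i0}.Finite := (hT.1 ‖x i0‖).subset fun i hi => by
      have hi : x i = x i0 := hi
      change ‖x i‖ ≤ ‖x i0‖
      rw [hi]
    unfold mult
    have : {i | x i = x i0}.ncard ≠ 0 := Set.ncard_ne_zero_of_mem (a := i0) rfl hf
    exact_mod_cast this
  have hex : ∀ n : Fin 5, ∃ i, x i = x i0 + (((z n).1 : ℝ), ((z n).2 : ℝ)) := by
    intro n
    have h1 : mult x (x i0 + (((z n).1 : ℝ), ((z n).2 : ℝ))) = mult x (x i0) := hper _ _ _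
    rw [← h1] at hpos
    by_contra! hc
    apply hpos
    have : {i | x i = x i0 + (((z n).1 : ℝ), ((z n).2 : ℝ))} = (∅ : Set ι) :=
      Set.eq_empty_of_forall_notMem fun i hi => hc i hi
    simp [mult, this]
  choose f hf using hex
  have hinj : Function.Injective f := by
    intro a b hab
    apply hz
    have : x (f a) = x (f b) := by rw [hab]
    rw [hf, hf] at this
    have := add_left_cancel this
    have h1 := congrArg Prod.fst this
    have h2 := congrArg Prod.snd this
    simp only [Int.cast_inj] at h1 h2
    exact Prod.ext h1 h2
  have := hT.2.2 (x i0 + q) (Finset.univ.image f) (by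
    intro i hi
    obtain ⟨n, _, rfl⟩ := Finset.mem_image.1 hi
    rw [hf, add_sub_add_left_eq_sub]
    exact strict_subset_interior w h _ (hzP n))
  rw [Finset.card_image_of_injective _ hinj] at this
  simpa using this

/-! ### Lattice tilings by counting in rows -/

/-- The index type of the lattice `ℤ²`: a row and a position in the row. -/
def latPt (z : Σ _ : ℤ, ℤ) : ℝ × ℝ := ((z.2 : ℝ), (z.1 : ℝ))

lemma tiling_of_rows {m : ℕ} (w : Fin m → ℝ × ℝ) (h : Fin m → ℝ) (hw : ∀ j, w j ≠ 0)
    (N : ℤ) (Lf Rf : ℝ → ℝ) (k : ℕ)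
    (hQ1 : ∀ p, (∀ j, |dotp (w j) p| < h j) →
      -(N : ℝ) ≤ p.2 ∧ p.2 < N ∧ Lf p.2 ≤ p.1 ∧ p.1 < Rf p.2)
    (hQ2 : ∀ p : ℝ × ℝ, -(N : ℝ) ≤ p.2 → p.2 < N → Lf p.2 ≤ p.1 → p.1 < Rf p.2 → p ∈ spoly w h)
    (hc : ∀ X Y : ℝ, ∑ n ∈ Finset.Ioc (⌊Y⌋ - N) (⌊Y⌋ + N),
      (⌊X - Lf (Y - n)⌋ - ⌊X - Rf (Y - n)⌋).toNat = k) :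
    IsKFoldTranslativeTiling (spoly w h) latPt k := by
  set S : ℝ × ℝ → Finset (Σ _ : ℤ, ℤ) := fun p =>
    (Finset.Ioc (⌊p.2⌋ - N) (⌊p.2⌋ + N)).sigma
      (fun n => Finset.Ioc ⌊p.1 - Rf (p.2 - n)⌋ ⌊p.1 - Lf (p.2 - n)⌋) with hS
  have hcard : ∀ p, (S p).card = k := by
    intro p
    rw [hS, Finset.card_sigma, ← hc p.1 p.2]
    refine Finset.sum_congr rfl fun n _ => ?_
    rw [Int.card_Ioc]
  have hmem : ∀ p z, z ∈ S p ↔ -(N : ℝ) ≤ (p - latPt z).2 ∧ (p - latPt z).2 < N ∧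
      Lf (p - latPt z).2 ≤ (p - latPt z).1 ∧ (p - latPt z).1 < Rf (p - latPt z).2 := by
    rintro p ⟨n, l⟩
    simp only [hS, Finset.mem_sigma, Finset.mem_Ioc, latPt, Prod.fst_sub, Prod.snd_sub]
    have e1 : ⌊p.2⌋ - N < n ↔ p.2 - n < N := by
      rw [sub_lt_iff_lt_add, Int.floor_lt]
      push_cast
      constructor <;> intro <;> linarith
    have e2 : n ≤ ⌊p.2⌋ + N ↔ -(N : ℝ) ≤ p.2 - n := by
      rw [← sub_le_iff_le_add, Int.le_floor]
      push_cast
      constructor <;> intro <;> linarith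
    have e3 : ⌊p.1 - Rf (p.2 - n)⌋ < l ↔ p.1 - l < Rf (p.2 - n) := by
      rw [Int.floor_lt]
      constructor <;> intro <;> linarith
    have e4 : l ≤ ⌊p.1 - Lf (p.2 - n)⌋ ↔ Lf (p.2 - n) ≤ p.1 - l := by
      rw [Int.le_floor]
      constructor <;> intro <;> linarith
    rw [e1, e2, e3, e4]
    tauto
  refine ⟨?_, ?_, ?_⟩
  · intro R
    refine (Finset.finite_toSet ((Finset.Icc (-⌈R⌉) ⌈R⌉).sigma fun _ =>
      Finset.Icc (-⌈R⌉) ⌈R⌉)).subset ?_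
    rintro ⟨n, l⟩ hz
    have hz : ‖((l : ℝ), (n : ℝ))‖ ≤ R := hz
    rw [Prod.norm_mk, sup_le_iff, Real.norm_eq_abs, Real.norm_eq_abs, abs_le, abs_le] at hz
    have hR := Int.le_ceil R
    simp only [Finset.coe_sigma, Set.mem_sigma_iff, Finset.coe_Icc, Set.mem_Icc]
    refine ⟨⟨?_, ?_⟩, ⟨?_, ?_⟩⟩ <;>
      · have : (0 : ℝ) = 0 := rfl
        rify
        linarith [hz.1.1, hz.1.2, hz.2.1, hz.2.2]
  · intro p
    refine ⟨S p, (hcard p).ge, fun z hz => ?_⟩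
    obtain ⟨a1, a2, a3, a4⟩ := (hmem p z).1 hz
    exact hQ2 _ a1 a2 a3 a4
  · intro p s hs
    rw [← hcard p]
    refine Finset.card_le_card fun z hz => ?_
    exact (hmem p z).2 (hQ1 _ (interior_strict w h hw _ (hs z hz)))

/-! ### Convex hull helper -/

lemma seg_mem {S : Set (ℝ × ℝ)} (hS : Convex ℝ S) {xa ya xb yb y : ℝ} (m : ℝ)
    (hA : (xa, ya) ∈ S) (hB : (xb, yb) ∈ S) (h1 : ya ≤ y) (h2 : y ≤ yb) (hlt : ya < yb)
    (hm : xb - xa = m * (yb - ya)) : (xa + m * (y - ya), y) ∈ S := by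
  have hp : 0 < yb - ya := by linarith
  have hpn := hp.ne'
  have := hS hA hB (a := (yb - y) / (yb - ya)) (b := (y - ya) / (yb - ya))
    (div_nonneg (by linarith) hp.le) (div_nonneg (by linarith) hp.le) (by field_simp; ring)
  convert this using 1
  have hxb : xb = xa + m * (yb - ya) := by linarith
  ext
  · simp only [Prod.smul_mk, Prod.mk_add_mk, smul_eq_mul]
    rw [hxb]
    field_simp
    ring
  · simp only [Prod.smul_mk, Prod.mk_add_mk, smul_eq_mul]
    field_simp
    ring

lemma hseg_mem {S : Set (ℝ × ℝ)} (hS : Convex ℝ S) {x1 x2 x y : ℝ}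
    (hA : (x1, y) ∈ S) (hB : (x2, y) ∈ S) (h1 : x1 ≤ x) (h2 : x ≤ x2) : (x, y) ∈ S := by
  rcases eq_or_lt_of_le (h1.trans h2) with h | h
  · have : x = x1 := by linarith
    rwa [this]
  have hp : 0 < x2 - x1 := by linarith
  have hpn := hp.ne'
  have := hS hA hB (a := (x2 - x) / (x2 - x1)) (b := (x - x1) / (x2 - x1))
    (div_nonneg (by linarith) hp.le) (div_nonneg (by linarith) hp.le) (by field_simp; ring)
  convert this using 1
  ext
  · simp only [Prod.smul_mk, Prod.mk_add_mk, smul_eq_mul]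
    field_simp
    ring
  · simp only [Prod.smul_mk, Prod.mk_add_mk, smul_eq_mul]
    field_simp
    ring

lemma trap_mem {S : Set (ℝ × ℝ)} (hS : Convex ℝ S) {xa ya xb yb xc yc xd yd x y : ℝ} (m n : ℝ)
    (hA : (xa, ya) ∈ S) (hB : (xb, yb) ∈ S) (hC : (xc, yc) ∈ S) (hD : (xd, yd) ∈ S)
    (h1 : ya ≤ y) (h2 : y ≤ yb) (hlt : ya < yb) (hm : xb - xa = m * (yb - ya))
    (h3 : yc ≤ y) (h4 : y ≤ yd) (hlt' : yc < yd) (hn : xd - xc = n * (yd - yc))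
    (h5 : xa + m * (y - ya) ≤ x) (h6 : x ≤ xc + n * (y - yc)) : (x, y) ∈ S :=
  hseg_mem hS (seg_mem hS m hA hB h1 h2 hlt hm) (seg_mem hS n hC hD h3 h4 hlt' hn) h5 h6

lemma comb3 {H : AddSubgroup (ℝ × ℝ)} {u v t : ℝ × ℝ} (a b d : ℤ) (hu : u ∈ H) (hv : v ∈ H)
    (ht : t ∈ H) {X Y : ℝ} (hX : X = a * u.1 + b * v.1 + d * t.1)
    (hY : Y = a * u.2 + b * v.2 + d * t.2) : (X, Y) ∈ H := by
  have := H.add_mem (H.add_mem (H.zsmul_mem hu a) (H.zsmul_mem hv b)) (H.zsmul_mem ht d)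
  convert this using 1
  ext
  · simp [hX]
  · simp [hY]

/-! ### The octagon -/

/-- Normals of the octagon. -/
def octW (c : ℝ) : Fin 4 → ℝ × ℝ :=
  ![(0, 1), (1, -(1 - c)), (1, -(2 * c - 1)), (1, -(2 - 2 * c))]

/-- Heights of the octagon. -/
def octH (c : ℝ) : Fin 4 → ℝ := ![2, c, c, 3 - 3 * c]

lemma forall_oct {c : ℝ} {p : ℝ × ℝ} {Q : ℝ → ℝ → Prop} :
    (∀ j, Q (dotp (octW c j) p) (octH c j)) ↔
      Q p.2 2 ∧ Q (p.1 - (1 - c) * p.2) c ∧ Q (p.1 - (2 * c - 1) * p.2) c ∧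
      Q (p.1 - (2 - 2 * c) * p.2) (3 - 3 * c) := by
  have e0 : dotp (octW c 0) p = p.2 := by simp [dotp, octW]
  have e1 : dotp (octW c 1) p = p.1 - (1 - c) * p.2 := by simp [dotp, octW]; ring
  have e2 : dotp (octW c 2) p = p.1 - (2 * c - 1) * p.2 := by simp [dotp, octW]; ring
  have e3 : dotp (octW c 3) p = p.1 - (2 - 2 * c) * p.2 := by simp [dotp, octW]; ring
  constructor
  · intro h
    have h0 := h 0
    have h1 := h 1
    have h2 := h 2
    have h3 := h 3
    rw [e0] at h0
    rw [e1] at h1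
    rw [e2] at h2
    rw [e3] at h3
    exact ⟨h0, h1, h2, h3⟩
  · rintro ⟨h0, h1, h2, h3⟩ j
    fin_cases j
    · change Q (dotp (octW c 0) p) 2
      rwa [e0]
    · change Q (dotp (octW c 1) p) c
      rwa [e1]
    · change Q (dotp (octW c 2) p) c
      rwa [e2]
    · change Q (dotp (octW c 3) p) (3 - 3 * c)
      rwa [e3]

lemma mem_oct {c x y : ℝ} : (x, y) ∈ spoly (octW c) (octH c) ↔
    |y| ≤ 2 ∧ |x - (1 - c) * y| ≤ c ∧ |x - (2 * c - 1) * y| ≤ c ∧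
      |x - (2 - 2 * c) * y| ≤ 3 - 3 * c :=
  forall_oct (c := c) (p := (x, y)) (Q := fun a b => |a| ≤ b)

/-- Vertices of the octagon. -/
noncomputable def octV (c : ℝ) : Finset (ℝ × ℝ) :=
  {(c - 1, -2), (c - 2, -2), (-c, 0), (c - 1, 1), (1 - c, 2), (2 - c, 2), (c, 0), (1 - c, -1)}

lemma octV_card {c : ℝ} (h1 : 2 / 3 < c) (h2 : c < 3 / 4) : (octV c).card = 8 := by
  unfold octV
  repeat rw [Finset.card_insert_of_notMem]
  · simp
  all_goals
    simp only [Finset.mem_insert, Finset.mem_singleton, Prod.mk.injEq, not_or, not_and]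
    norm_num
  all_goals
    first
    | done
    | (intro hh; linarith)

lemma octV_mem {c : ℝ} (h1 : 2 / 3 < c) (h2 : c < 3 / 4) :
    ∀ v ∈ octV c, v ∈ spoly (octW c) (octH c) := by
  intro v hv
  simp only [octV, Finset.mem_insert, Finset.mem_singleton] at hv
  rcases hv with rfl | rfl | rfl | rfl | rfl | rfl | rfl | rfl <;> rw [mem_oct] <;>
    refine ⟨?_, ?_, ?_, ?_⟩ <;> rw [abs_le] <;> constructor <;> linarith

lemma oct_hull {c : ℝ} (h1 : 2 / 3 < c) (h2 : c < 3 / 4) :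
    spoly (octW c) (octH c) = convexHull ℝ (octV c : Set (ℝ × ℝ)) := by
  apply Set.Subset.antisymm
  · rintro ⟨x, y⟩ hp
    rw [mem_oct] at hp
    simp only [abs_le] at hp
    obtain ⟨⟨a1, a2⟩, ⟨a3, a4⟩, ⟨a5, a6⟩, a7, a8⟩ := hp
    have hS := convex_convexHull ℝ (octV c : Set (ℝ × ℝ))
    have hV : ∀ v ∈ octV c, v ∈ convexHull ℝ (octV c : Set (ℝ × ℝ)) := fun v hv =>
      subset_convexHull ℝ _ hv
    have m1 := hV (c - 1, -2) (by simp [octV])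
    have m2 := hV (c - 2, -2) (by simp [octV])
    have m3 := hV (-c, 0) (by simp [octV])
    have m4 := hV (c - 1, 1) (by simp [octV])
    have m5 := hV (1 - c, 2) (by simp [octV])
    have m6 := hV (2 - c, 2) (by simp [octV])
    have m7 := hV (c, 0) (by simp [octV])
    have m8 := hV (1 - c, -1) (by simp [octV])
    rcases le_total y (-1) with b1 | b1
    · exact trap_mem hS (1 - c) (2 - 2 * c) m2 m3 m1 m8 (by linarith) (by linarith) (by norm_num)
        (by ring) (by linarith) (by linarith) (by norm_num) (by ring) (by linarith) (by linarith)
    rcases le_total y 0 with b2 | b2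
    · exact trap_mem hS (1 - c) (2 * c - 1) m2 m3 m8 m7 (by linarith) (by linarith) (by norm_num)
        (by ring) (by linarith) (by linarith) (by norm_num) (by ring) (by linarith) (by linarith)
    rcases le_total y 1 with b3 | b3
    · exact trap_mem hS (2 * c - 1) (1 - c) m3 m4 m7 m6 (by linarith) (by linarith) (by norm_num)
        (by ring) (by linarith) (by linarith) (by norm_num) (by ring) (by linarith) (by linarith)
    · exact trap_mem hS (2 - 2 * c) (1 - c) m4 m5 m7 m6 (by linarith) (by linarith) (by norm_num)
        (by ring) (by linarith) (by linarith) (by norm_num) (by ring) (by linarith) (by linarith)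
  · exact convexHull_min (fun v hv => octV_mem h1 h2 v hv) (spoly_convex _ _)

lemma oct_extreme {c : ℝ} (h1 : 2 / 3 < c) (h2 : c < 3 / 4) :
    ∀ v ∈ octV c, v ∈ Set.extremePoints ℝ (spoly (octW c) (octH c)) := by
  intro v hv
  have hm := octV_mem h1 h2 v hv
  simp only [octV, Finset.mem_insert, Finset.mem_singleton] at hv
  have key : ∀ (v : ℝ × ℝ) (i j : Fin 4), v ∈ spoly (octW c) (octH c) →
      (dotp (octW c i) v = octH c i ∨ dotp (octW c i) v = -octH c i) →
      (dotp (octW c j) v = octH c j ∨ dotp (octW c j) v = -octH c j) →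
      ((octW c i).1 * (octW c j).2 - (octW c i).2 * (octW c j).1 ≠ 0) →
      0 < octH c i → 0 < octH c j →
      v ∈ Set.extremePoints ℝ (spoly (octW c) (octH c)) := by
    intro v i j hm hi hj hd pi pj
    exact mem_extreme _ _ v hm i j ((abs_eq pi.le).2 hi) ((abs_eq pj.le).2 hj) hd
  rcases hv with rfl | rfl | rfl | rfl | rfl | rfl | rfl | rfl
  · refine key _ 0 3 hm (Or.inr ?_) (Or.inl ?_) ?_ ?_ ?_ <;> simp [dotp, octW, octH] <;> linarith
  · refine key _ 0 1 hm (Or.inr ?_) (Or.inr ?_) ?_ ?_ ?_ <;> simp [dotp, octW, octH] <;> linarith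
  · refine key _ 1 2 hm (Or.inr ?_) (Or.inr ?_) ?_ ?_ ?_ <;> simp [dotp, octW, octH] <;>
      linarith
  · refine key _ 2 3 hm (Or.inr ?_) (Or.inr ?_) ?_ ?_ ?_ <;> simp [dotp, octW, octH] <;>
      linarith
  · refine key _ 0 3 hm (Or.inl ?_) (Or.inr ?_) ?_ ?_ ?_ <;> simp [dotp, octW, octH] <;> linarith
  · refine key _ 0 1 hm (Or.inl ?_) (Or.inl ?_) ?_ ?_ ?_ <;> simp [dotp, octW, octH] <;> linarith
  · refine key _ 1 2 hm (Or.inl ?_) (Or.inl ?_) ?_ ?_ ?_ <;> simp [dotp, octW, octH] <;>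
      linarith
  · refine key _ 2 3 hm (Or.inl ?_) (Or.inl ?_) ?_ ?_ ?_ <;> simp [dotp, octW, octH] <;>
      linarith

lemma octW_ne (c : ℝ) : ∀ j, octW c j ≠ 0 := by
  intro j
  fin_cases j <;> simp [octW, Prod.ext_iff]

lemma octH_pos {c : ℝ} (h1 : 2 / 3 < c) (h2 : c < 3 / 4) : ∀ j, 0 < octH c j := by
  intro j
  fin_cases j <;> simp [octH] <;> linarith

lemma oct_polygon {c : ℝ} (h1 : 2 / 3 < c) (h2 : c < 3 / 4) :
    IsConvexPolygon (spoly (octW c) (octH c)) (octV c) := by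
  refine ⟨oct_hull h1 h2, oct_extreme h1 h2, ⟨0, strict_subset_interior _ _ _ fun j => ?_⟩⟩
  have := octH_pos h1 h2 j
  simpa [dotp] using this

lemma oct_bound {c : ℝ} (h1 : 2 / 3 < c) (h2 : c < 3 / 4) :
    ∀ p ∈ spoly (octW c) (octH c), ‖p‖ ≤ 3 := by
  rintro ⟨x, y⟩ hp
  rw [mem_oct] at hp
  simp only [abs_le] at hp
  obtain ⟨⟨a1, a2⟩, ⟨a3, a4⟩, -⟩ := hp
  rw [Prod.norm_mk, sup_le_iff, Real.norm_eq_abs, Real.norm_eq_abs, abs_le, abs_le]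
  refine ⟨⟨?_, ?_⟩, ?_, ?_⟩
  · nlinarith
  · nlinarith
  · linarith
  · linarith

/-- Left boundary of the octagon at height `y`. -/
noncomputable def octL (c y : ℝ) : ℝ :=
  max (max (-c + (1 - c) * y) (-c + (2 * c - 1) * y)) (-(3 - 3 * c) + (2 - 2 * c) * y)

/-- Right boundary of the octagon at height `y`. -/
noncomputable def octR (c y : ℝ) : ℝ :=
  min (min (c + (1 - c) * y) (c + (2 * c - 1) * y)) (3 - 3 * c + (2 - 2 * c) * y)

lemma oct_tiling {c : ℝ} (h1 : 2 / 3 < c) (h2 : c < 3 / 4) :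
    IsKFoldTranslativeTiling (spoly (octW c) (octH c)) latPt 5 := by
  refine tiling_of_rows (octW c) (octH c) (octW_ne c) 2
    (octL c) (octR c) 5 ?_ ?_ ?_
  · rintro ⟨x, y⟩ hp
    have hp := (forall_oct (c := c) (p := (x, y)) (Q := fun a b => |a| < b)).1 hp
    simp only [abs_lt] at hp
    obtain ⟨⟨a1, a2⟩, ⟨a3, a4⟩, ⟨a5, a6⟩, a7, a8⟩ := hp
    simp only [octL, octR, max_le_iff, lt_min_iff]
    push_cast
    refine ⟨by linarith, by linarith, ⟨⟨by linarith, by linarith⟩, by linarith⟩,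
      ⟨by linarith, by linarith⟩, by linarith⟩
  · rintro ⟨x, y⟩ a1 a2 a3 a4
    simp only [octL, octR, max_le_iff, lt_min_iff] at a3 a4
    push_cast at a1 a2
    obtain ⟨⟨b1, b2⟩, b3⟩ := a3
    obtain ⟨⟨b4, b5⟩, b6⟩ := a4
    rw [mem_oct]
    simp only [abs_le]
    refine ⟨⟨by linarith, by linarith⟩, ⟨by linarith, by linarith⟩, ⟨by linarith, by linarith⟩,
      by linarith, by linarith⟩
  · intro X Y
    obtain ⟨a, ha⟩ : ∃ a : ℤ, a = ⌊Y⌋ := ⟨_, rfl⟩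
    obtain ⟨t, ht⟩ : ∃ t : ℝ, t = Y - a := ⟨_, rfl⟩
    have t0 : 0 ≤ t := by rw [ht, ha]; linarith [Int.floor_le Y]
    have t1 : t ≤ 1 := by rw [ht, ha]; linarith [Int.lt_floor_add_one Y]
    have p1 : 0 ≤ (c - 2 / 3) * t := mul_nonneg (by linarith) t0
    have p2 : 0 ≤ (3 / 4 - c) * t := mul_nonneg (by linarith) t0
    have p3 : 0 ≤ (c - 2 / 3) * (1 - t) := mul_nonneg (by linarith) (by linarith)
    have p4 : 0 ≤ (3 / 4 - c) * (1 - t) := mul_nonneg (by linarith) (by linarith)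
    rw [← ha]
    have hI : Finset.Ioc (a - 2) (a + 2) = {a - 1, a, a + 1, a + 2} := by
      ext n
      simp only [Finset.mem_Ioc, Finset.mem_insert, Finset.mem_singleton]
      omega
    have hY : Y = a + t := by linarith
    rw [hI, Finset.sum_insert (by simp; try omega), Finset.sum_insert (by simp; try omega), Finset.sum_insert (by simp; try omega),
      Finset.sum_singleton]
    have y1 : Y - ((a - 1 : ℤ) : ℝ) = t + 1 := by rw [hY]; push_cast; ring
    have y2 : Y - (a : ℝ) = t := by rw [hY]; ring
    have y3 : Y - ((a + 1 : ℤ) : ℝ) = t - 1 := by rw [hY]; push_cast; ring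
    have y4 : Y - ((a + 2 : ℤ) : ℝ) = t - 2 := by rw [hY]; push_cast; ring
    rw [y1, y2, y3, y4]
    have LA : octL c (t + 1) = c - 1 + t * (2 - 2 * c) := by
      simp only [octL, max_def]; split_ifs <;> linarith
    have LB : octL c t = -c + t * (2 * c - 1) := by
      simp only [octL, max_def]; split_ifs <;> linarith
    have LC : octL c (t - 1) = -1 + t * (1 - c) := by
      simp only [octL, max_def]; split_ifs <;> linarith
    have LD : octL c (t - 2) = c - 2 + t * (1 - c) := by
      simp only [octL, max_def]; split_ifs <;> linarith
    have RA : octR c (t + 1) = 1 + t * (1 - c) := by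
      simp only [octR, min_def]; split_ifs <;> linarith
    have RB : octR c t = c + t * (1 - c) := by
      simp only [octR, min_def]; split_ifs <;> linarith
    have RC : octR c (t - 1) = 1 - c + t * (2 * c - 1) := by
      simp only [octR, min_def]; split_ifs <;> linarith
    have RD : octR c (t - 2) = c - 1 + t * (2 - 2 * c) := by
      simp only [octR, min_def]; split_ifs <;> linarith
    have cA : ⌊X - octR c (t + 1)⌋ ≤ ⌊X - octL c (t + 1)⌋ := by
      apply Int.floor_le_floor; rw [LA, RA]; linarith
    have cB : ⌊X - octR c t⌋ ≤ ⌊X - octL c t⌋ := by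
      apply Int.floor_le_floor; rw [LB, RB]; linarith
    have cC : ⌊X - octR c (t - 1)⌋ ≤ ⌊X - octL c (t - 1)⌋ := by
      apply Int.floor_le_floor; rw [LC, RC]; linarith
    have cD : ⌊X - octR c (t - 2)⌋ ≤ ⌊X - octL c (t - 2)⌋ := by
      apply Int.floor_le_floor; rw [LD, RD]; linarith
    have d1 : ⌊X - octR c (t + 1)⌋ = ⌊X - octL c (t - 1)⌋ - 2 := by
      rw [← Int.floor_sub_ofNat, RA, LC]; congr 1; ring
    have d2 : ⌊X - octR c (t - 1)⌋ = ⌊X - octL c t⌋ - 1 := by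
      rw [← Int.floor_sub_one, RC, LB]; congr 1; ring
    have d3 : ⌊X - octR c t⌋ = ⌊X - octL c (t - 2)⌋ - 2 := by
      rw [← Int.floor_sub_ofNat, RB, LD]; congr 1; ring
    have d4 : ⌊X - octR c (t - 2)⌋ = ⌊X - octL c (t + 1)⌋ := by
      rw [RD, LA]
    omega

lemma period_of_tree {m : ℕ} (w : Fin m → ℝ × ℝ) (h : Fin m → ℝ) (hh : ∀ j, 0 < h j)
    {ι : Type} (x : ι → ℝ × ℝ) (k : ℕ) (hT : IsKFoldTranslativeTiling (spoly w h) x k)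
    (l : ℝ × ℝ) (W : List ((ℝ × ℝ) × (ℝ × ℝ)))
    (hW : ∀ q ∈ W, dif q.1 (dif q.2 (mult x)) = fun _ => 0) (hC : TreeClaim l [] W) :
    l ∈ periods (mult x) := by
  rw [mem_periods]
  refine hC _ (mult_good w h hh x k hT) (by simp) fun q hq => ?_
  rw [dif_comm q.2 l, dif_comm q.1 l, hW q hq, dif_zero]

/-- The octagon tree, with only the last leaf depending on the vector `l`. -/
lemma oct_tree {c : ℝ} (hc : Irrational c) (l : ℝ × ℝ)
    (hl : ∀ H : AddSubgroup (ℝ × ℝ), ((-2, -2) : ℝ × ℝ) ∈ H → ((0, 3) : ℝ × ℝ) ∈ H →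
      ((-1, 1) : ℝ × ℝ) ∈ H → l ∈ H) :
    TreeClaim l [] [((2 * c - 1, 1), (-1, 1)), ((2 - 2 * c, 1), (0, 3)),
      ((2 - 2 * c, 2), (-2, -2))] := by
  have go : ∀ (S : List (ℝ × ℝ)) (u v t : ℝ × ℝ), S = [u, v, t] → ∀ n m r : ℤ, n ≠ 0 → m ≠ 0 →
      ∀ a b d a' b' d' : ℤ,
      (n : ℝ) = a * u.1 + b * v.1 + d * t.1 → (0 : ℝ) = a * u.2 + b * v.2 + d * t.2 →
      m * c + r = a' * u.1 + b' * v.1 + d' * t.1 → (0 : ℝ) = a' * u.2 + b' * v.2 + d' * t.2 →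
      TreeClaim l S [] := by
    rintro S u v t rfl n m r hn hm a b d a' b' d' q1 q2 q3 q4
    refine TreeClaim.leaf hc n m r hn hm fun H hH => ?_
    have hu := hH u (by simp)
    have hv := hH v (by simp)
    have ht := hH t (by simp)
    exact ⟨comb3 a b d hu hv ht q1 q2, comb3 a' b' d' hu hv ht q3 q4⟩
  refine TreeClaim.node _ _ (TreeClaim.node _ _ (TreeClaim.node _ _ ?_ ?_)
    (TreeClaim.node _ _ ?_ ?_)) (TreeClaim.node _ _ (TreeClaim.node _ _ ?_ ?_)
    (TreeClaim.node _ _ ?_ ?_))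
  · refine go _ _ _ _ rfl (-1) 4 (-3) (by norm_num) (by norm_num) 2 (-3) (-1) 0 (-1) 1
      ?_ ?_ ?_ ?_ <;> push_cast <;> ring
  · refine go _ _ _ _ rfl (-1) 4 (-3) (by norm_num) (by norm_num) 1 1 1 0 (-1) 1
      ?_ ?_ ?_ ?_ <;> push_cast <;> ring
  · refine go _ _ _ _ rfl 1 6 (-3) (by norm_num) (by norm_num) 1 (-1) 1 0 (-1) 3
      ?_ ?_ ?_ ?_ <;> push_cast <;> ring
  · refine go _ _ _ _ rfl 6 6 (-3) (by norm_num) (by norm_num) (-3) (-2) 0 0 (-1) 3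
      ?_ ?_ ?_ ?_ <;> push_cast <;> ring
  · refine go _ _ _ _ rfl 1 (-2) 3 (by norm_num) (by norm_num) 1 (-1) (-1) 0 1 (-1)
      ?_ ?_ ?_ ?_ <;> push_cast <;> ring
  · refine go _ _ _ _ rfl (-4) (-2) 3 (by norm_num) (by norm_num) 1 0 2 0 1 (-1)
      ?_ ?_ ?_ ?_ <;> push_cast <;> ring
  · refine go _ _ _ _ rfl (-3) (-2) 4 (by norm_num) (by norm_num) 0 (-1) 3 1 0 (-2)
      ?_ ?_ ?_ ?_ <;> push_cast <;> ring
  · exact TreeClaim.goodLeaf fun H hH => hl H (hH _ (by simp)) (hH _ (by simp)) (hH _ (by simp))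

lemma oct_five {c : ℝ} (hc : Irrational c) (h1 : 2 / 3 < c) (h2 : c < 3 / 4)
    {ι : Type} (x : ι → ℝ × ℝ) (k : ℕ) (hk : 0 < k)
    (hT : IsKFoldTranslativeTiling (spoly (octW c) (octH c)) x k) : 5 ≤ k := by
  have hV := octV_mem h1 h2
  have hH := octH_pos h1 h2
  have m2 := hV (c - 2, -2) (by simp [octV])
  have m3 := hV (-c, 0) (by simp [octV])
  have m4 := hV (c - 1, 1) (by simp [octV])
  have m5 := hV (1 - c, 2) (by simp [octV])
  have E1 : EdgeData (octW c) (octH c) 1 (c - 2, -2) (-c, 0) := by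
    refine ⟨?_, ?_, m2, m3, ?_, ⟨0, by decide, ?_⟩, ⟨2, by decide, ?_⟩⟩
    · simp [dotp, octW, octH]; ring
    · simp [dotp, octW, octH]
    · intro j hj
      fin_cases j
      · simp [dotp, octW]
      · exact absurd rfl hj
      · simp [dotp, octW]; intro hh; linarith
      · simp [dotp, octW]; intro hh; linarith
    · rw [abs_eq (hH _).le]; right; simp [dotp, octW, octH]
    · rw [abs_eq (hH _).le]; right; simp [dotp, octW, octH]
  have E2 : EdgeData (octW c) (octH c) 2 (-c, 0) (c - 1, 1) := by
    refine ⟨?_, ?_, m3, m4, ?_, ⟨1, by decide, ?_⟩, ⟨3, by decide, ?_⟩⟩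
    · simp [dotp, octW, octH]
    · simp [dotp, octW, octH]; ring
    · intro j hj
      fin_cases j
      · simp [dotp, octW]
      · simp [dotp, octW]; intro hh; linarith
      · exact absurd rfl hj
      · simp [dotp, octW]; intro hh; linarith
    · rw [abs_eq (hH _).le]; right; simp [dotp, octW, octH]
    · rw [abs_eq (hH _).le]; right; simp [dotp, octW, octH]; ring
  have E3 : EdgeData (octW c) (octH c) 3 (c - 1, 1) (1 - c, 2) := by
    refine ⟨?_, ?_, m4, m5, ?_, ⟨2, by decide, ?_⟩, ⟨0, by decide, ?_⟩⟩
    · simp [dotp, octW, octH]; ring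
    · simp [dotp, octW, octH]; ring
    · intro j hj
      fin_cases j
      · simp [dotp, octW]
      · simp [dotp, octW]; intro hh; linarith
      · simp [dotp, octW]; intro hh; linarith
      · exact absurd rfl hj
    · rw [abs_eq (hH _).le]; right; simp [dotp, octW, octH]; ring
    · rw [abs_eq (hH _).le]; left; simp [dotp, octW, octH]
  have hed := edge_dif (octW c) (octH c) (octW_ne c) hH 3 (oct_bound h1 h2) x k hT
  have D1 := hed 1 _ _ (2 - 2 * c, 2) (-2, -2) E1
    (by ext <;> simp; ring) (by ext <;> simp; ring)
  have D2 := hed 2 _ _ (2 * c - 1, 1) (-1, 1) E2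
    (by ext <;> simp; ring) (by ext <;> simp <;> ring)
  have D3 := hed 3 _ _ (2 - 2 * c, 1) (0, 3) E3
    (by ext <;> simp <;> ring) (by ext <;> simp; norm_num)
  have hper : ∀ l : ℝ × ℝ, (∀ H : AddSubgroup (ℝ × ℝ), ((-2, -2) : ℝ × ℝ) ∈ H →
      ((0, 3) : ℝ × ℝ) ∈ H → ((-1, 1) : ℝ × ℝ) ∈ H → l ∈ H) → l ∈ periods (mult x) := by
    intro l hl
    refine period_of_tree _ _ hH x k hT l _ ?_ (oct_tree hc l hl)
    intro q hq
    simp only [List.mem_cons, List.not_mem_nil, or_false] at hq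
    rcases hq with rfl | rfl | rfl
    · exact D2
    · exact D3
    · exact D1
  refine five_le _ _ x k hk hT (hper _ fun H q1 q2 q3 => ?_) (hper _ fun H q1 q2 q3 => ?_)
    (1 / 10, 1 / 2) ![(0, -1), (-1, -1), (0, 0), (0, 1), (1, 2)] (by decide) ?_
  · exact comb3 (-1) (-1) 1 q1 q2 q3 (by push_cast; ring) (by push_cast; ring)
  · exact comb3 (-1) (-1) 2 q1 q2 q3 (by push_cast; ring) (by push_cast; ring)
  · intro n
    refine (forall_oct (c := c) (Q := fun a b => |a| < b)).2 ?_
    fin_cases n <;> simp [abs_lt] <;> norm_num <;>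
      (refine ⟨⟨?_, ?_⟩, ⟨?_, ?_⟩, ?_, ?_⟩ <;> linarith)

/-! ### The decagon -/

/-- Normals of the decagon. -/
noncomputable def decW (c : ℝ) : Fin 5 → ℝ × ℝ :=
  ![(0, 1), (1, -(c - 1 / 2)), (1, -(1 - c)), (1, -(2 * c - 1)), (1, -(2 - 2 * c))]

/-- Heights of the decagon. -/
noncomputable def decH (c : ℝ) : Fin 5 → ℝ := ![3, 1 / 2, 2 * c - 1, 5 * c - 3, 3 - 3 * c]

lemma forall_dec {c : ℝ} {p : ℝ × ℝ} {Q : ℝ → ℝ → Prop} :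
    (∀ j, Q (dotp (decW c j) p) (decH c j)) ↔
      Q p.2 3 ∧ Q (p.1 - (c - 1 / 2) * p.2) (1 / 2) ∧ Q (p.1 - (1 - c) * p.2) (2 * c - 1) ∧
      Q (p.1 - (2 * c - 1) * p.2) (5 * c - 3) ∧ Q (p.1 - (2 - 2 * c) * p.2) (3 - 3 * c) := by
  have e0 : dotp (decW c 0) p = p.2 := by simp [dotp, decW]
  have e1 : dotp (decW c 1) p = p.1 - (c - 1 / 2) * p.2 := by simp [dotp, decW]; ring
  have e2 : dotp (decW c 2) p = p.1 - (1 - c) * p.2 := by simp [dotp, decW]; ring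
  have e3 : dotp (decW c 3) p = p.1 - (2 * c - 1) * p.2 := by simp [dotp, decW]; ring
  have e4 : dotp (decW c 4) p = p.1 - (2 - 2 * c) * p.2 := by simp [dotp, decW]; ring
  constructor
  · intro h
    have h0 := h 0
    have h1 := h 1
    have h2 := h 2
    have h3 := h 3
    have h4 := h 4
    rw [e0] at h0
    rw [e1] at h1
    rw [e2] at h2
    rw [e3] at h3
    rw [e4] at h4
    exact ⟨h0, h1, h2, h3, h4⟩
  · rintro ⟨h0, h1, h2, h3, h4⟩ j
    fin_cases j
    · change Q (dotp (decW c 0) p) 3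
      rwa [e0]
    · change Q (dotp (decW c 1) p) (1 / 2)
      rwa [e1]
    · change Q (dotp (decW c 2) p) (2 * c - 1)
      rwa [e2]
    · change Q (dotp (decW c 3) p) (5 * c - 3)
      rwa [e3]
    · change Q (dotp (decW c 4) p) (3 - 3 * c)
      rwa [e4]

lemma mem_dec {c x y : ℝ} : (x, y) ∈ spoly (decW c) (decH c) ↔
    |y| ≤ 3 ∧ |x - (c - 1 / 2) * y| ≤ 1 / 2 ∧ |x - (1 - c) * y| ≤ 2 * c - 1 ∧
      |x - (2 * c - 1) * y| ≤ 5 * c - 3 ∧ |x - (2 - 2 * c) * y| ≤ 3 - 3 * c :=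
  forall_dec (c := c) (p := (x, y)) (Q := fun a b => |a| ≤ b)

/-- Vertices of the decagon. -/
noncomputable def decV (c : ℝ) : Finset (ℝ × ℝ) :=
  {(c, 1), (2 - c, 3), (c, 3), (1 - c, 2), (c - 1, 1), (-c, -1), (c - 2, -3), (-c, -3),
    (c - 1, -2), (1 - c, -1)}

lemma decV_card {c : ℝ} (h1 : 3 / 4 < c) (h2 : c < 5 / 6) : (decV c).card = 10 := by
  unfold decV
  repeat rw [Finset.card_insert_of_notMem]
  · simp
  all_goals
    simp only [Finset.mem_insert, Finset.mem_singleton, Prod.mk.injEq, not_or, not_and]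
    norm_num
  all_goals
    first
    | done
    | (intro hh; linarith)

lemma decV_mem {c : ℝ} (h1 : 3 / 4 < c) (h2 : c < 5 / 6) :
    ∀ v ∈ decV c, v ∈ spoly (decW c) (decH c) := by
  intro v hv
  simp only [decV, Finset.mem_insert, Finset.mem_singleton] at hv
  rcases hv with rfl | rfl | rfl | rfl | rfl | rfl | rfl | rfl | rfl | rfl <;> rw [mem_dec] <;>
    refine ⟨?_, ?_, ?_, ?_, ?_⟩ <;> rw [abs_le] <;> constructor <;> linarith

lemma dec_hull {c : ℝ} (h1 : 3 / 4 < c) (h2 : c < 5 / 6) :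
    spoly (decW c) (decH c) = convexHull ℝ (decV c : Set (ℝ × ℝ)) := by
  apply Set.Subset.antisymm
  · rintro ⟨x, y⟩ hp
    rw [mem_dec] at hp
    simp only [abs_le] at hp
    obtain ⟨⟨a1, a2⟩, ⟨a3, a4⟩, ⟨a5, a6⟩, ⟨a7, a8⟩, a9, a10⟩ := hp
    have hS := convex_convexHull ℝ (decV c : Set (ℝ × ℝ))
    have hV : ∀ v ∈ decV c, v ∈ convexHull ℝ (decV c : Set (ℝ × ℝ)) := fun v hv =>
      subset_convexHull ℝ _ hv
    have m1 := hV (c, 1) (by simp [decV])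
    have m2 := hV (2 - c, 3) (by simp [decV])
    have m3 := hV (c, 3) (by simp [decV])
    have m4 := hV (1 - c, 2) (by simp [decV])
    have m5 := hV (c - 1, 1) (by simp [decV])
    have m6 := hV (-c, -1) (by simp [decV])
    have m7 := hV (c - 2, -3) (by simp [decV])
    have m8 := hV (-c, -3) (by simp [decV])
    have m9 := hV (c - 1, -2) (by simp [decV])
    have m10 := hV (1 - c, -1) (by simp [decV])
    rcases le_total y (-2) with b1 | b1
    · exact trap_mem hS (1 - c) (2 * c - 1) m7 m6 m8 m9 (by linarith) (by linarith) (by norm_num)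
        (by ring) (by linarith) (by linarith) (by norm_num) (by ring) (by linarith) (by linarith)
    rcases le_total y (-1) with b2 | b2
    · exact trap_mem hS (1 - c) (2 - 2 * c) m7 m6 m9 m10 (by linarith) (by linarith) (by norm_num)
        (by ring) (by linarith) (by linarith) (by norm_num) (by ring) (by linarith) (by linarith)
    rcases le_total y 1 with b3 | b3
    · exact trap_mem hS (c - 1 / 2) (c - 1 / 2) m6 m5 m10 m1 (by linarith) (by linarith)
        (by norm_num) (by ring) (by linarith) (by linarith) (by norm_num) (by ring)
        (by linarith) (by linarith)
    rcases le_total y 2 with b4 | b4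
    · exact trap_mem hS (2 - 2 * c) (1 - c) m5 m4 m1 m2 (by linarith) (by linarith) (by norm_num)
        (by ring) (by linarith) (by linarith) (by norm_num) (by ring) (by linarith) (by linarith)
    · exact trap_mem hS (2 * c - 1) (1 - c) m4 m3 m1 m2 (by linarith) (by linarith) (by norm_num)
        (by ring) (by linarith) (by linarith) (by norm_num) (by ring) (by linarith) (by linarith)
  · exact convexHull_min (fun v hv => decV_mem h1 h2 v hv) (spoly_convex _ _)

lemma decW_ne (c : ℝ) : ∀ j, decW c j ≠ 0 := by
  intro j
  fin_cases j <;> simp [decW, Prod.ext_iff]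

lemma decH_pos {c : ℝ} (h1 : 3 / 4 < c) (h2 : c < 5 / 6) : ∀ j, 0 < decH c j := by
  intro j
  fin_cases j <;> simp [decH] <;> linarith

lemma dec_extreme {c : ℝ} (h1 : 3 / 4 < c) (h2 : c < 5 / 6) :
    ∀ v ∈ decV c, v ∈ Set.extremePoints ℝ (spoly (decW c) (decH c)) := by
  intro v hv
  have hm := decV_mem h1 h2 v hv
  have hH := decH_pos h1 h2
  simp only [decV, Finset.mem_insert, Finset.mem_singleton] at hv
  have key : ∀ (v : ℝ × ℝ) (i j : Fin 5), v ∈ spoly (decW c) (decH c) →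
      (dotp (decW c i) v = decH c i ∨ dotp (decW c i) v = -decH c i) →
      (dotp (decW c j) v = decH c j ∨ dotp (decW c j) v = -decH c j) →
      ((decW c i).1 * (decW c j).2 - (decW c i).2 * (decW c j).1 ≠ 0) →
      v ∈ Set.extremePoints ℝ (spoly (decW c) (decH c)) := by
    intro v i j hm hi hj hd
    exact mem_extreme _ _ v hm i j ((abs_eq (hH i).le).2 hi) ((abs_eq (hH j).le).2 hj) hd
  rcases hv with rfl | rfl | rfl | rfl | rfl | rfl | rfl | rfl | rfl | rfl
  · refine key _ 1 2 hm (Or.inl ?_) (Or.inl ?_) ?_ <;> simp [dotp, decW, decH] <;> grind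
  · refine key _ 0 2 hm (Or.inl ?_) (Or.inl ?_) ?_ <;> simp [dotp, decW, decH] <;> grind
  · refine key _ 0 3 hm (Or.inl ?_) (Or.inr ?_) ?_ <;> simp [dotp, decW, decH] <;> grind
  · refine key _ 3 4 hm (Or.inr ?_) (Or.inr ?_) ?_ <;> simp [dotp, decW, decH] <;> grind
  · refine key _ 1 4 hm (Or.inr ?_) (Or.inr ?_) ?_ <;> simp [dotp, decW, decH] <;> grind
  · refine key _ 1 2 hm (Or.inr ?_) (Or.inr ?_) ?_ <;> simp [dotp, decW, decH] <;> grind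
  · refine key _ 0 2 hm (Or.inr ?_) (Or.inr ?_) ?_ <;> simp [dotp, decW, decH] <;> grind
  · refine key _ 0 3 hm (Or.inr ?_) (Or.inl ?_) ?_ <;> simp [dotp, decW, decH] <;> grind
  · refine key _ 3 4 hm (Or.inl ?_) (Or.inl ?_) ?_ <;> simp [dotp, decW, decH] <;> grind
  · refine key _ 1 4 hm (Or.inl ?_) (Or.inl ?_) ?_ <;> simp [dotp, decW, decH] <;> grind

lemma dec_polygon {c : ℝ} (h1 : 3 / 4 < c) (h2 : c < 5 / 6) :
    IsConvexPolygon (spoly (decW c) (decH c)) (decV c) := by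
  refine ⟨dec_hull h1 h2, dec_extreme h1 h2, ⟨0, strict_subset_interior _ _ _ fun j => ?_⟩⟩
  have := decH_pos h1 h2 j
  simpa [dotp] using this

lemma dec_bound {c : ℝ} (h1 : 3 / 4 < c) (h2 : c < 5 / 6) :
    ∀ p ∈ spoly (decW c) (decH c), ‖p‖ ≤ 5 := by
  rintro ⟨x, y⟩ hp
  rw [mem_dec] at hp
  simp only [abs_le] at hp
  obtain ⟨⟨a1, a2⟩, ⟨a3, a4⟩, -⟩ := hp
  rw [Prod.norm_mk, sup_le_iff, Real.norm_eq_abs, Real.norm_eq_abs, abs_le, abs_le]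
  refine ⟨⟨?_, ?_⟩, ?_, ?_⟩
  · nlinarith
  · nlinarith
  · linarith
  · linarith

/-- Left boundary of the decagon at height `y`. -/
noncomputable def decL (c y : ℝ) : ℝ :=
  max (max (-(1 / 2) + (c - 1 / 2) * y) (-(2 * c - 1) + (1 - c) * y))
    (max (-(5 * c - 3) + (2 * c - 1) * y) (-(3 - 3 * c) + (2 - 2 * c) * y))

/-- Right boundary of the decagon at height `y`. -/
noncomputable def decR (c y : ℝ) : ℝ :=
  min (min (1 / 2 + (c - 1 / 2) * y) (2 * c - 1 + (1 - c) * y))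
    (min (5 * c - 3 + (2 * c - 1) * y) (3 - 3 * c + (2 - 2 * c) * y))

lemma decL_eq {c y v : ℝ} (h1 : -(1 / 2) + (c - 1 / 2) * y ≤ v)
    (h2 : -(2 * c - 1) + (1 - c) * y ≤ v) (h3 : -(5 * c - 3) + (2 * c - 1) * y ≤ v)
    (h4 : -(3 - 3 * c) + (2 - 2 * c) * y ≤ v)
    (h : v = -(1 / 2) + (c - 1 / 2) * y ∨ v = -(2 * c - 1) + (1 - c) * y ∨
      v = -(5 * c - 3) + (2 * c - 1) * y ∨ v = -(3 - 3 * c) + (2 - 2 * c) * y) :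
    decL c y = v := by
  apply le_antisymm
  · exact max_le (max_le h1 h2) (max_le h3 h4)
  · simp only [decL, le_max_iff]
    rcases h with h | h | h | h
    · exact Or.inl (Or.inl h.le)
    · exact Or.inl (Or.inr h.le)
    · exact Or.inr (Or.inl h.le)
    · exact Or.inr (Or.inr h.le)

lemma decR_eq_neg (c y : ℝ) : decR c y = -decL c (-y) := by
  simp only [decR, decL, max_neg_neg, ← min_neg_neg, neg_neg]
  congr 2 <;> ring

lemma dec_tiling {c : ℝ} (h1 : 3 / 4 < c) (h2 : c < 5 / 6) :
    IsKFoldTranslativeTiling (spoly (decW c) (decH c)) latPt 5 := by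
  refine tiling_of_rows (decW c) (decH c) (decW_ne c) 3
    (decL c) (decR c) 5 ?_ ?_ ?_
  · rintro ⟨x, y⟩ hp
    have hp := (forall_dec (c := c) (p := (x, y)) (Q := fun a b => |a| < b)).1 hp
    simp only [abs_lt] at hp
    obtain ⟨⟨a1, a2⟩, ⟨a3, a4⟩, ⟨a5, a6⟩, ⟨a7, a8⟩, a9, a10⟩ := hp
    simp only [decL, decR, max_le_iff, lt_min_iff]
    push_cast
    refine ⟨by linarith, by linarith, ⟨⟨by linarith, by linarith⟩, by linarith, by linarith⟩,
      ⟨by linarith, by linarith⟩, by linarith, by linarith⟩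
  · rintro ⟨x, y⟩ a1 a2 a3 a4
    simp only [decL, decR, max_le_iff, lt_min_iff] at a3 a4
    push_cast at a1 a2
    obtain ⟨⟨b1, b2⟩, b3, b7⟩ := a3
    obtain ⟨⟨b4, b5⟩, b6, b8⟩ := a4
    rw [mem_dec]
    simp only [abs_le]
    refine ⟨⟨by linarith, by linarith⟩, ⟨by linarith, by linarith⟩, ⟨by linarith, by linarith⟩,
      ⟨by linarith, by linarith⟩, by linarith, by linarith⟩
  · intro X Y
    obtain ⟨a, ha⟩ : ∃ a : ℤ, a = ⌊Y⌋ := ⟨_, rfl⟩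
    obtain ⟨t, ht⟩ : ∃ t : ℝ, t = Y - a := ⟨_, rfl⟩
    have t0 : 0 ≤ t := by rw [ht, ha]; linarith [Int.floor_le Y]
    have t1 : t ≤ 1 := by rw [ht, ha]; linarith [Int.lt_floor_add_one Y]
    have p1 : 0 ≤ (c - 3 / 4) * t := mul_nonneg (by linarith) t0
    have p2 : 0 ≤ (5 / 6 - c) * t := mul_nonneg (by linarith) t0
    have p3 : 0 ≤ (c - 3 / 4) * (1 - t) := mul_nonneg (by linarith) (by linarith)
    have p4 : 0 ≤ (5 / 6 - c) * (1 - t) := mul_nonneg (by linarith) (by linarith)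
    rw [← ha]
    have hI : Finset.Ioc (a - 3) (a + 3) = {a - 2, a - 1, a, a + 1, a + 2, a + 3} := by
      ext n
      simp only [Finset.mem_Ioc, Finset.mem_insert, Finset.mem_singleton]
      omega
    have hY : Y = a + t := by linarith
    rw [hI, Finset.sum_insert (by simp; try omega), Finset.sum_insert (by simp; try omega),
      Finset.sum_insert (by simp; try omega), Finset.sum_insert (by simp; try omega),
      Finset.sum_insert (by simp; try omega), Finset.sum_singleton]
    have y0 : Y - ((a - 2 : ℤ) : ℝ) = t + 2 := by rw [hY]; push_cast; ring
    have y1 : Y - ((a - 1 : ℤ) : ℝ) = t + 1 := by rw [hY]; push_cast; ring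
    have y2 : Y - (a : ℝ) = t := by rw [hY]; ring
    have y3 : Y - ((a + 1 : ℤ) : ℝ) = t - 1 := by rw [hY]; push_cast; ring
    have y4 : Y - ((a + 2 : ℤ) : ℝ) = t - 2 := by rw [hY]; push_cast; ring
    have y5 : Y - ((a + 3 : ℤ) : ℝ) = t - 3 := by rw [hY]; push_cast; ring
    rw [y0, y1, y2, y3, y4, y5]
    have LA : decL c (t + 2) = 1 - c + t * (2 * c - 1) :=
      decL_eq (by linarith) (by linarith) (by linarith) (by linarith)
        (Or.inr (Or.inr (Or.inl (by ring))))
    have LB : decL c (t + 1) = c - 1 + t * (2 - 2 * c) :=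
      decL_eq (by linarith) (by linarith) (by linarith) (by linarith)
        (Or.inr (Or.inr (Or.inr (by ring))))
    have LC : decL c t = -(1 / 2) + t * (c - 1 / 2) :=
      decL_eq (by linarith) (by linarith) (by linarith) (by linarith) (Or.inl (by ring))
    have LD : decL c (t - 1) = -c + t * (c - 1 / 2) :=
      decL_eq (by linarith) (by linarith) (by linarith) (by linarith) (Or.inl (by ring))
    have LE : decL c (t - 2) = -1 + t * (1 - c) :=
      decL_eq (by linarith) (by linarith) (by linarith) (by linarith) (Or.inr (Or.inl (by ring)))
    have LF : decL c (t - 3) = c - 2 + t * (1 - c) :=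
      decL_eq (by linarith) (by linarith) (by linarith) (by linarith) (Or.inr (Or.inl (by ring)))
    have RA : decR c (t + 2) = 1 + t * (1 - c) := by
      rw [decR_eq_neg, neg_eq_iff_eq_neg]
      exact decL_eq (by linarith) (by linarith) (by linarith) (by linarith)
        (Or.inr (Or.inl (by ring)))
    have RB : decR c (t + 1) = c + t * (1 - c) := by
      rw [decR_eq_neg, neg_eq_iff_eq_neg]
      exact decL_eq (by linarith) (by linarith) (by linarith) (by linarith)
        (Or.inr (Or.inl (by ring)))
    have RC : decR c t = -(1 / 2) + t * (c - 1 / 2) + 1 := by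
      rw [decR_eq_neg, neg_eq_iff_eq_neg]
      exact decL_eq (by linarith) (by linarith) (by linarith) (by linarith) (Or.inl (by ring))
    have RD : decR c (t - 1) = -c + t * (c - 1 / 2) + 1 := by
      rw [decR_eq_neg, neg_eq_iff_eq_neg]
      exact decL_eq (by linarith) (by linarith) (by linarith) (by linarith) (Or.inl (by ring))
    have RE : decR c (t - 2) = c - 1 + t * (2 - 2 * c) := by
      rw [decR_eq_neg, neg_eq_iff_eq_neg]
      exact decL_eq (by linarith) (by linarith) (by linarith) (by linarith)
        (Or.inr (Or.inr (Or.inr (by ring))))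
    have RF : decR c (t - 3) = -c + t * (2 * c - 1) := by
      rw [decR_eq_neg, neg_eq_iff_eq_neg]
      exact decL_eq (by linarith) (by linarith) (by linarith) (by linarith)
        (Or.inr (Or.inr (Or.inl (by ring))))
    have cA : ⌊X - decR c (t + 2)⌋ ≤ ⌊X - decL c (t + 2)⌋ := by
      apply Int.floor_le_floor; rw [LA, RA]; linarith
    have cB : ⌊X - decR c (t + 1)⌋ ≤ ⌊X - decL c (t + 1)⌋ := by
      apply Int.floor_le_floor; rw [LB, RB]; linarith
    have cE : ⌊X - decR c (t - 2)⌋ ≤ ⌊X - decL c (t - 2)⌋ := by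
      apply Int.floor_le_floor; rw [LE, RE]; linarith
    have cF : ⌊X - decR c (t - 3)⌋ ≤ ⌊X - decL c (t - 3)⌋ := by
      apply Int.floor_le_floor; rw [LF, RF]; linarith
    have d1 : ⌊X - decR c (t + 2)⌋ = ⌊X - decL c (t - 2)⌋ - 2 := by
      rw [← Int.floor_sub_ofNat, RA, LE]; congr 1; ring
    have d2 : ⌊X - decR c (t - 2)⌋ = ⌊X - decL c (t + 1)⌋ := by
      rw [RE, LB]
    have d3 : ⌊X - decR c (t + 1)⌋ = ⌊X - decL c (t - 3)⌋ - 2 := by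
      rw [← Int.floor_sub_ofNat, RB, LF]; congr 1; ring
    have d4 : ⌊X - decR c (t - 3)⌋ = ⌊X - decL c (t + 2)⌋ + 1 := by
      rw [← Int.floor_add_one, RF, LA]; congr 1; ring
    have d5 : ⌊X - decR c t⌋ = ⌊X - decL c t⌋ - 1 := by
      rw [← Int.floor_sub_one, RC, LC]; congr 1; ring
    have d6 : ⌊X - decR c (t - 1)⌋ = ⌊X - decL c (t - 1)⌋ - 1 := by
      rw [← Int.floor_sub_one, RD, LD]; congr 1; ring
    omega

/-- The decagon tree, with only one leaf depending on the vector `l`. -/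
lemma dec_tree {c : ℝ} (hc : Irrational c) (l : ℝ × ℝ)
    (hl : ∀ H : AddSubgroup (ℝ × ℝ), ((1, 5) : ℝ × ℝ) ∈ H → ((0, 3) : ℝ × ℝ) ∈ H →
      ((-1, 0) : ℝ × ℝ) ∈ H → l ∈ H) :
    TreeClaim l [] [((1 - 2 * c, -2), (-1, 0)), ((2 * c - 2, -1), (0, 3)),
      ((1 - 2 * c, -1), (1, 5)), ((2 - 2 * c, 0), (-2, -6))] := by
  have go : ∀ (W : List ((ℝ × ℝ) × (ℝ × ℝ))) (S : List (ℝ × ℝ)) (u v t : ℝ × ℝ),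
      u ∈ S → v ∈ S → t ∈ S → ∀ n m r : ℤ, n ≠ 0 → m ≠ 0 →
      ∀ a b d a' b' d' : ℤ,
      (n : ℝ) = a * u.1 + b * v.1 + d * t.1 → (0 : ℝ) = a * u.2 + b * v.2 + d * t.2 →
      m * c + r = a' * u.1 + b' * v.1 + d' * t.1 → (0 : ℝ) = a' * u.2 + b' * v.2 + d' * t.2 →
      TreeClaim l S W := by
    intro W S u v t hu hv ht n m r hn hm a b d a' b' d' q1 q2 q3 q4
    refine TreeClaim.leaf hc n m r hn hm fun H hH => ?_
    have hu := hH u hu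
    have hv := hH v hv
    have ht := hH t ht
    exact ⟨comb3 a b d hu hv ht q1 q2, comb3 a' b' d' hu hv ht q3 q4⟩
  refine TreeClaim.node _ _ (TreeClaim.node _ _ (TreeClaim.node _ _ ?_ ?_)
    (TreeClaim.node _ _ (TreeClaim.node _ _ ?_ ?_) ?_)) (TreeClaim.node _ _
    (TreeClaim.node _ _ ?_ ?_) (TreeClaim.node _ _ ?_ ?_))
  · refine go _ _ (1 - 2 * c, -1) (2 * c - 2, -1) (1 - 2 * c, -2) (by simp) (by simp) (by simp)
      1 (-4) 3 (by norm_num) (by norm_num) (-3) (-1) 2 1 (-1) 0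
      ?_ ?_ ?_ ?_ <;> push_cast <;> ring
  · refine go _ _ (1, 5) (2 * c - 2, -1) (1 - 2 * c, -2) (by simp) (by simp) (by simp)
      (-2) 10 (-9) (by norm_num) (by norm_num) 3 5 5 1 5 0
      ?_ ?_ ?_ ?_ <;> push_cast <;> ring
  · refine go _ _ (2 - 2 * c, 0) (1 - 2 * c, -1) (1 - 2 * c, -2) (by simp) (by simp) (by simp)
      1 (-2) 2 (by norm_num) (by norm_num) 1 (-2) 1 1 0 0
      ?_ ?_ ?_ ?_ <;> push_cast <;> ring
  · have q2 : TreeClaim l [((-2, -6) : ℝ × ℝ), (1 - 2 * c, -1), (0, 3), (1 - 2 * c, -2)] [] := by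
      refine TreeClaim.leaf hc (-2) (-2) 1 (by norm_num) (by norm_num) fun H hH => ?_
      have g1 := hH (-2, -6) (by simp)
      have g2 := hH (1 - 2 * c, -1) (by simp)
      have g3 := hH (0, 3) (by simp)
      have g4 := hH (1 - 2 * c, -2) (by simp)
      exact ⟨comb3 1 2 0 g1 g3 g3 (by push_cast; ring) (by push_cast; ring),
        comb3 2 (-1) 0 g2 g4 g4 (by push_cast; ring) (by push_cast; ring)⟩
    exact q2
  · refine go _ _ (1, 5) (0, 3) (1 - 2 * c, -2) (by simp) (by simp) (by simp)
      3 (-6) 3 (by norm_num) (by norm_num) 3 (-5) 0 0 2 3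
      ?_ ?_ ?_ ?_ <;> push_cast <;> ring
  · refine go _ _ (1 - 2 * c, -1) (2 * c - 2, -1) (-1, 0) (by simp) (by simp) (by simp)
      (-1) (-4) 3 (by norm_num) (by norm_num) 0 0 1 1 (-1) 0
      ?_ ?_ ?_ ?_ <;> push_cast <;> ring
  · refine go _ _ (1, 5) (2 * c - 2, -1) (-1, 0) (by simp) (by simp) (by simp)
      (-1) 10 (-9) (by norm_num) (by norm_num) 0 0 1 1 5 0
      ?_ ?_ ?_ ?_ <;> push_cast <;> ring
  · refine go _ _ (1 - 2 * c, -1) (0, 3) (-1, 0) (by simp) (by simp) (by simp)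
      (-1) (-6) 3 (by norm_num) (by norm_num) 0 0 1 3 1 0
      ?_ ?_ ?_ ?_ <;> push_cast <;> ring
  · exact TreeClaim.goodLeaf fun H hH => hl H (hH _ (by simp)) (hH _ (by simp)) (hH _ (by simp))

lemma dec_five {c : ℝ} (hc : Irrational c) (h1 : 3 / 4 < c) (h2 : c < 5 / 6)
    {ι : Type} (x : ι → ℝ × ℝ) (k : ℕ) (hk : 0 < k)
    (hT : IsKFoldTranslativeTiling (spoly (decW c) (decH c)) x k) : 5 ≤ k := by
  have hV := decV_mem h1 h2
  have hH := decH_pos h1 h2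
  have m3 := hV (c, 3) (by simp [decV])
  have m4 := hV (1 - c, 2) (by simp [decV])
  have m5 := hV (c - 1, 1) (by simp [decV])
  have m6 := hV (-c, -1) (by simp [decV])
  have m7 := hV (c - 2, -3) (by simp [decV])
  have m8 := hV (-c, -3) (by simp [decV])
  have mk : ∀ (i : Fin 5) (a b : ℝ × ℝ) (j j' : Fin 5), a ∈ spoly (decW c) (decH c) →
      b ∈ spoly (decW c) (decH c) → dotp (decW c i) a = -decH c i →
      dotp (decW c i) b = -decH c i → j ≠ i → j' ≠ i →
      (dotp (decW c j) a = decH c j ∨ dotp (decW c j) a = -decH c j) →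
      (dotp (decW c j') b = decH c j' ∨ dotp (decW c j') b = -decH c j') →
      (∀ j, j ≠ i → dotp (decW c j) a ≠ dotp (decW c j) b) → EdgeData (decW c) (decH c) i a b := by
    intro i a b j j' ma mb ha hb hj hj' ta tb hne
    exact ⟨ha, hb, ma, mb, hne, ⟨j, hj, (abs_eq (hH j).le).2 ta⟩, ⟨j', hj', (abs_eq (hH j').le).2 tb⟩⟩
  have E0 : EdgeData (decW c) (decH c) 0 (c - 2, -3) (-c, -3) := by
    refine mk _ _ _ 2 3 m7 m8 ?_ ?_ (by decide) (by decide) (Or.inr ?_) (Or.inl ?_) ?_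
    · simp [dotp, decW, decH]
    · simp [dotp, decW, decH]
    · simp [dotp, decW, decH]; ring
    · simp [dotp, decW, decH]; ring
    · intro j hj
      fin_cases j
      · exact absurd rfl hj
      all_goals
        simp [dotp, decW]; intro hh; linarith
  have E1 : EdgeData (decW c) (decH c) 1 (c - 1, 1) (-c, -1) := by
    refine mk _ _ _ 4 2 m5 m6 ?_ ?_ (by decide) (by decide) (Or.inr ?_) (Or.inr ?_) ?_
    · simp [dotp, decW, decH]; ring
    · simp [dotp, decW, decH]; try ring
    · simp [dotp, decW, decH]; ring
    · simp [dotp, decW, decH]; ring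
    · intro j hj
      fin_cases j
      · simp [dotp, decW]; intro hh; linarith
      · exact absurd rfl hj
      all_goals
        simp [dotp, decW]; intro hh; linarith
  have E3 : EdgeData (decW c) (decH c) 3 (c, 3) (1 - c, 2) := by
    refine mk _ _ _ 0 4 m3 m4 ?_ ?_ (by decide) (by decide) (Or.inl ?_) (Or.inr ?_) ?_
    · simp [dotp, decW, decH]; ring
    · simp [dotp, decW, decH]; ring
    · simp [dotp, decW, decH]
    · simp [dotp, decW, decH]; ring
    · intro j hj
      fin_cases j
      · simp [dotp, decW]
      · simp [dotp, decW]; intro hh; linarith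
      · simp [dotp, decW]; intro hh; linarith
      · exact absurd rfl hj
      · simp [dotp, decW]; intro hh; linarith
  have E4 : EdgeData (decW c) (decH c) 4 (1 - c, 2) (c - 1, 1) := by
    refine mk _ _ _ 3 1 m4 m5 ?_ ?_ (by decide) (by decide) (Or.inr ?_) (Or.inr ?_) ?_
    · simp [dotp, decW, decH]; ring
    · simp [dotp, decW, decH]; ring
    · simp [dotp, decW, decH]; ring
    · simp [dotp, decW, decH]; ring
    · intro j hj
      fin_cases j
      · simp [dotp, decW]
      · simp [dotp, decW]; intro hh; linarith
      · simp [dotp, decW]; intro hh; linarith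
      · simp [dotp, decW]; intro hh; linarith
      · exact absurd rfl hj
  have hed := edge_dif (decW c) (decH c) (decW_ne c) hH 5 (dec_bound h1 h2) x k hT
  have D0 := hed 0 _ _ (2 - 2 * c, 0) (-2, -6) E0
    (by ext <;> simp <;> ring) (by ext <;> simp <;> ring)
  have D1 := hed 1 _ _ (1 - 2 * c, -2) (-1, 0) E1
    (by ext <;> simp <;> ring) (by ext <;> simp <;> ring)
  have D3 := hed 3 _ _ (1 - 2 * c, -1) (1, 5) E3
    (by ext <;> simp <;> ring) (by ext <;> simp <;> ring)
  have D4 := hed 4 _ _ (2 * c - 2, -1) (0, 3) E4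
    (by ext <;> simp <;> ring) (by ext <;> simp <;> ring)
  have hper : ∀ l : ℝ × ℝ, (∀ H : AddSubgroup (ℝ × ℝ), ((1, 5) : ℝ × ℝ) ∈ H →
      ((0, 3) : ℝ × ℝ) ∈ H → ((-1, 0) : ℝ × ℝ) ∈ H → l ∈ H) → l ∈ periods (mult x) := by
    intro l hl
    refine period_of_tree _ _ hH x k hT l _ ?_ (dec_tree hc l hl)
    intro q hq
    simp only [List.mem_cons, List.not_mem_nil, or_false] at hq
    rcases hq with rfl | rfl | rfl | rfl
    · exact D1
    · exact D4
    · exact D3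
    · exact D0
  refine five_le _ _ x k hk hT (hper _ fun H q1 q2 q3 => ?_) (hper _ fun H q1 q2 q3 => ?_)
    (1 / 5, 1 / 2) ![(0, -1), (0, 0), (0, 1), (1, 2), (1, 3)] (by decide) ?_
  · exact comb3 0 0 (-1) q1 q2 q3 (by push_cast; ring) (by push_cast; ring)
  · exact comb3 (-1) 2 (-1) q1 q2 q3 (by push_cast; ring) (by push_cast; ring)
  · intro n
    refine (forall_dec (c := c) (Q := fun a b => |a| < b)).2 ?_
    fin_cases n <;> simp [abs_lt] <;> norm_num <;>
      (refine ⟨⟨?_, ?_⟩, ⟨?_, ?_⟩, ⟨?_, ?_⟩, ?_, ?_⟩ <;> linarith)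

/-- There exist a centrally symmetric convex octagon and a centrally symmetric convex
decagon each of which admits a five-fold translative tiling of the plane but admits no
`k`-fold translative tiling for any `k ≤ 4`; that is, `τ(D₈) = τ(D₁₀) = 5`. -/
theorem exists_octagon_and_decagon_with_tau_five :
    ∃ (D₈ : Set (ℝ × ℝ)) (V₈ : Finset (ℝ × ℝ)) (D₁₀ : Set (ℝ × ℝ)) (V₁₀ : Finset (ℝ × ℝ)),
      IsConvexPolygon D₈ V₈ ∧ V₈.card = 8 ∧ IsCentrallySymmetric D₈ ∧
      IsConvexPolygon D₁₀ V₁₀ ∧ V₁₀.card = 10 ∧ IsCentrallySymmetric D₁₀ ∧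
      (∃ (ι : Type) (x : ι → ℝ × ℝ), IsKFoldTranslativeTiling D₈ x 5) ∧
      (∀ (k : ℕ), 0 < k → k ≤ 4 →
        ∀ (ι : Type) (x : ι → ℝ × ℝ), ¬ IsKFoldTranslativeTiling D₈ x k) ∧
      (∃ (ι : Type) (x : ι → ℝ × ℝ), IsKFoldTranslativeTiling D₁₀ x 5) ∧
      (∀ (k : ℕ), 0 < k → k ≤ 4 →
        ∀ (ι : Type) (x : ι → ℝ × ℝ), ¬ IsKFoldTranslativeTiling D₁₀ x k) := by
  obtain ⟨c, hc, c1, c2⟩ := exists_irrational_btwn (show (2 / 3 : ℝ) < 3 / 4 by norm_num)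
  obtain ⟨d, hd, d1, d2⟩ := exists_irrational_btwn (show (3 / 4 : ℝ) < 5 / 6 by norm_num)
  refine ⟨spoly (octW c) (octH c), octV c, spoly (decW d) (decH d), decV d,
    oct_polygon c1 c2, octV_card c1 c2, spoly_symm _ _,
    dec_polygon d1 d2, decV_card d1 d2, spoly_symm _ _,
    ⟨_, latPt, oct_tiling c1 c2⟩, ?_, ⟨_, latPt, dec_tiling d1 d2⟩, ?_⟩
  · intro k hk hk4 ι x hT
    have := oct_five hc c1 c2 x k hk hT
    omega
  · intro k hk hk4 ι x hT
    have := dec_five hd d1 d2 x k hk hT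
    omega
end

section
/- Let P be a centrally symmetric convex 2m-gon and let P + X be a k-fold translative tiling of the plane. For a vertex v ∈ V + X, define φ(v) = k − #{i : v ∈ int(P) + x_i} (the count taken with multiplicity over the index set), and let ℓ be the number of indices i such that v lies in the relative interior of some edge of P + x_i. Then there exists a positive integer κ such that φ(v) = κ·(m−1)/2 + ℓ/2. -/
open Pointwise

namespace PhiAux

open Filter Topology

lemma clm_apply (g : (ℝ × ℝ) →L[ℝ] ℝ) (p : ℝ × ℝ) :
    g p = p.1 * g (1, 0) + p.2 * g (0, 1) := by
  have : p = p.1 • ((1 : ℝ), (0 : ℝ)) + p.2 • ((0 : ℝ), (1 : ℝ)) := by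
    ext <;> simp
  conv_lhs => rw [this]
  simp only [map_add, map_smul, smul_eq_mul]

/-- unique maximizer functional at a vertex -/
lemma exists_functional {P : Set (ℝ × ℝ)} {V : Finset (ℝ × ℝ)} (hP : IsConvexPolygon P V)
    {w : ℝ × ℝ} (hw : w ∈ V) :
    ∃ f : (ℝ × ℝ) →L[ℝ] ℝ, ∀ p ∈ P, p ≠ w → f p < f w := by
  obtain ⟨hPV, hext, -⟩ := hP
  have hcP : Convex ℝ P := hPV ▸ convex_convexHull ℝ _
  have hVP : (V : Set (ℝ × ℝ)) ⊆ P := hPV ▸ subset_convexHull ℝ _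
  have hcd : Convex ℝ (P \ {w}) := (hcP.mem_extremePoints_iff_convex_diff.1 (hext w hw)).2
  have hsub : convexHull ℝ ((V : Set (ℝ × ℝ)) \ {w}) ⊆ P \ {w} :=
    convexHull_min (Set.diff_subset_diff_left hVP) hcd
  have hclosed : IsClosed (convexHull ℝ ((V : Set (ℝ × ℝ)) \ {w})) :=
    ((V.finite_toSet.subset Set.diff_subset).isCompact_convexHull ℝ).isClosed
  have hnot : w ∉ convexHull ℝ ((V : Set (ℝ × ℝ)) \ {w}) := fun h => (hsub h).2 rfl
  obtain ⟨f, u, h1, h2⟩ :=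
    geometric_hahn_banach_closed_point (convex_convexHull ℝ _) hclosed hnot
  refine ⟨f, ?_⟩
  have hconv : Convex ℝ {p : ℝ × ℝ | p ≠ w → f p < f w} := by
    intro p hp q hq a b ha hb hab hne
    simp only [Set.mem_setOf_eq] at hp hq
    simp only [map_add, map_smul, smul_eq_mul]
    by_cases hpw : p = w
    · by_cases hqw : q = w
      · exact absurd (by rw [hpw, hqw, ← add_smul, hab, one_smul]) hne
      · have hb' : 0 < b := by
          rcases hb.eq_or_lt with h | h
          · subst h
            exact absurd (by rw [hpw]; simp at hab; simp [hab]) hne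
          · exact h
        have := hq hqw
        rw [hpw]
        have ha' : a = 1 - b := by linarith
        rw [ha']
        nlinarith
    · have hp' := hp hpw
      by_cases hqw : q = w
      · have ha' : 0 < a := by
          rcases ha.eq_or_lt with h | h
          · subst h
            exact absurd (by rw [hqw]; simp at hab; simp [hab]) hne
          · exact h
        rw [hqw]
        have hb' : b = 1 - a := by linarith
        rw [hb']
        nlinarith
      · have hq' := hq hqw
        rcases ha.eq_or_lt with h | h
        · subst h
          have : b = 1 := by linarith
          subst this
          simpa using hq'
        · have hb' : b = 1 - a := by linarith
          subst hb'
          nlinarith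
  have hsub2 : P ⊆ {p : ℝ × ℝ | p ≠ w → f p < f w} := by
    rw [hPV]
    refine convexHull_min ?_ hconv
    intro p hp hne
    exact (h1 p (subset_convexHull ℝ _ ⟨hp, hne⟩)).trans h2
  exact fun p hp => hsub2 hp

lemma lex_convex (g h : (ℝ × ℝ) →L[ℝ] ℝ) (α β : ℝ) :
    Convex ℝ {p : ℝ × ℝ | g p < α ∨ (g p = α ∧ h p < β)} := by
  intro p hp q hq a b ha hb hab
  simp only [Set.mem_setOf_eq, map_add, map_smul, smul_eq_mul] at *
  rcases ha.eq_or_lt with h0 | ha'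
  · subst h0
    have : b = 1 := by linarith
    subst this
    simpa using hq
  rcases hb.eq_or_lt with h0 | hb'
  · subst h0
    have : a = 1 := by linarith
    subst this
    simpa using hp
  have hb1 : b = 1 - a := by linarith
  subst hb1
  rcases hp with hp | ⟨hp, hp2⟩
  · rcases hq with hq | ⟨hq, hq2⟩
    · left; nlinarith
    · left; rw [hq]; nlinarith
  · rcases hq with hq | ⟨hq, hq2⟩
    · left; rw [hp]; nlinarith
    · right
      constructor
      · rw [hp, hq]; ring
      · nlinarith

lemma frontier_edge {P : Set (ℝ × ℝ)} {V : Finset (ℝ × ℝ)} (hP : IsConvexPolygon P V)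
    {q : ℝ × ℝ} (hq : q ∈ P) (hqi : q ∉ interior P) (hqV : q ∉ V) :
    ∃ a b : ℝ × ℝ, IsEdge P V a b ∧ q ∈ openSegment ℝ a b := by
  obtain ⟨hPV, hext, hint⟩ := hP
  have hcP : Convex ℝ P := hPV ▸ convex_convexHull ℝ _
  have hVP : (V : Set (ℝ × ℝ)) ⊆ P := hPV ▸ subset_convexHull ℝ _
  obtain ⟨g, hg⟩ := geometric_hahn_banach_open_point hcP.interior isOpen_interior hqi
  have hgP : ∀ p ∈ P, g p ≤ g q := by
    intro p hp
    have h1 : p ∈ closure (interior P) := by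
      rw [hcP.closure_interior_eq_closure_of_nonempty_interior hint]
      exact subset_closure hp
    exact closure_minimal (t := {p | g p ≤ g q}) (fun a ha => (hg a ha).le)
      (isClosed_le g.continuous continuous_const) h1
  set A := g (1, 0) with hA
  set B := g (0, 1) with hB
  have hAB : 0 < A ^ 2 + B ^ 2 := by
    obtain ⟨o, ho⟩ := hint
    have h1 := hg o ho
    rw [clm_apply g o, clm_apply g q, ← hA, ← hB] at h1
    by_contra hc
    have hA0 : A = 0 := by nlinarith [sq_nonneg A, sq_nonneg B]
    have hB0 : B = 0 := by nlinarith [sq_nonneg A, sq_nonneg B]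
    rw [hA0, hB0] at h1
    simp at h1
  have key : ∀ h : (ℝ × ℝ) →L[ℝ] ℝ, (∀ p r : ℝ × ℝ, g p = g r → h p = h r → p = r) →
      ∃ a ∈ V, g a = g q ∧ h q < h a := by
    intro h hinj
    by_contra hc
    push Not at hc
    have : P ⊆ {p : ℝ × ℝ | g p < g q ∨ (g p = g q ∧ h p < h q)} := by
      rw [hPV]
      refine convexHull_min ?_ (lex_convex g h _ _)
      intro p hp
      rcases (hgP p (hVP hp)).eq_or_lt with h1 | h1
      · right
        refine ⟨h1, lt_of_le_of_ne (hc p hp h1) ?_⟩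
        intro h2
        exact hqV (hinj p q h1 h2 ▸ hp)
      · left; exact h1
    have := this hq
    simp at this
  let h : (ℝ × ℝ) →L[ℝ] ℝ :=
    A • ContinuousLinearMap.snd ℝ ℝ ℝ - B • ContinuousLinearMap.fst ℝ ℝ ℝ
  have hh : ∀ p, h p = A * p.2 - B * p.1 := fun p => by simp [h]
  have hinj : ∀ p r : ℝ × ℝ, g p = g r → h p = h r → p = r := by
    intro p r h1 h2
    rw [clm_apply g p, clm_apply g r, ← hA, ← hB] at h1
    rw [hh, hh] at h2
    have e1 : (A ^ 2 + B ^ 2) * (p.1 - r.1) = 0 := by linear_combination A * h1 - B * h2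
    have e2 : (A ^ 2 + B ^ 2) * (p.2 - r.2) = 0 := by linear_combination B * h1 + A * h2
    ext
    · have := (mul_eq_zero.1 e1).resolve_left hAB.ne'
      linarith
    · have := (mul_eq_zero.1 e2).resolve_left hAB.ne'
      linarith
  obtain ⟨a, haV, hga, hha⟩ := key h hinj
  obtain ⟨b, hbV, hgb, hhb⟩ := key (-h) (fun p r h1 h2 => hinj p r h1 (by simpa using h2))
  have hhb' : h b < h q := by simpa using hhb
  refine ⟨a, b, ⟨haV, hbV, ?_, ?_⟩, ?_⟩
  · intro hab
    rw [hab] at hha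
    linarith
  · intro p hp
    have hpP : p ∈ P := hcP.segment_subset (hVP haV) (hVP hbV) hp
    refine ⟨subset_closure hpP, fun hpi => ?_⟩
    have h1 := hg p hpi
    obtain ⟨s, t, hs, ht, hst, rfl⟩ := hp
    simp only [map_add, map_smul, smul_eq_mul, hga, hgb] at h1
    rw [← add_mul, hst, one_mul] at h1
    exact lt_irrefl _ h1
  · have hpos : 0 < h a - h b := by linarith
    refine ⟨(h q - h b) / (h a - h b), (h a - h q) / (h a - h b),
      div_pos (by linarith) hpos, div_pos (by linarith) hpos, by field_simp; ring, ?_⟩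
    apply hinj
    · simp only [map_add, map_smul, smul_eq_mul, hga, hgb]
      field_simp; ring
    · simp only [map_add, map_smul, smul_eq_mul]
      field_simp; ring

lemma edge_frontier {P : Set (ℝ × ℝ)} {V : Finset (ℝ × ℝ)} (hP : IsConvexPolygon P V)
    {q a b : ℝ × ℝ} (he : IsEdge P V a b) (hq : q ∈ openSegment ℝ a b) :
    q ∈ P ∧ q ∉ interior P ∧ q ∉ V := by
  obtain ⟨hPV, hext, hint⟩ := hP
  have hcP : Convex ℝ P := hPV ▸ convex_convexHull ℝ _
  have hVP : (V : Set (ℝ × ℝ)) ⊆ P := hPV ▸ subset_convexHull ℝ _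
  obtain ⟨ha, hb, hab, hs⟩ := he
  have hqs := openSegment_subset_segment ℝ a b hq
  refine ⟨hcP.segment_subset (hVP ha) (hVP hb) hqs, (hs hqs).2, fun hqV => ?_⟩
  have := (mem_extremePoints.1 (hext q hqV)).2 a (hVP ha) b (hVP hb) hq
  exact hab (this.1.trans this.2.symm)

/-- direction `d` points from `q` into the interior of `P` -/
def Inward (P : Set (ℝ × ℝ)) (q d : ℝ × ℝ) : Prop := ∃ t : ℝ, 0 < t ∧ q + t • d ∈ interior P

lemma inward_eventually {P : Set (ℝ × ℝ)} (hcP : Convex ℝ P) {q d : ℝ × ℝ} (hq : q ∈ P)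
    (h : Inward P q d) : ∀ᶠ ε : ℝ in 𝓝[>] 0, q + ε • d ∈ interior P := by
  obtain ⟨t, ht, hqt⟩ := h
  filter_upwards [Ioc_mem_nhdsGT ht] with ε hε
  have := hcP.add_smul_mem_interior' (subset_closure hq) (y := t • d) hqt
    (t := ε / t) ⟨div_pos hε.1 ht, (div_le_one ht).2 hε.2⟩
  rwa [smul_smul, div_mul_cancel₀ _ ht.ne'] at this

lemma not_mem_of_inward_neg {P : Set (ℝ × ℝ)} (hcP : Convex ℝ P) {q d : ℝ × ℝ}
    (hqi : q ∉ interior P) (h : Inward P q (-d)) {ε : ℝ} (hε : 0 < ε) : q + ε • d ∉ P := by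
  intro hmem
  obtain ⟨t, ht, hqt⟩ := h
  apply hqi
  have hst := hcP.openSegment_interior_self_subset_interior hqt hmem
  apply hst
  refine ⟨ε / (t + ε), t / (t + ε), by positivity, by positivity, by field_simp; ring, ?_⟩
  have : (ε / (t + ε)) + (t / (t + ε)) = 1 := by field_simp; ring
  ext
  · simp; field_simp; ring
  · simp; field_simp; ring

/-- count lemma -/
lemma count {P : Set (ℝ × ℝ)} (hcP : Convex ℝ P) (hcomp : IsCompact P) {k : ℕ} {ι : Type}
    {x : ι → ℝ × ℝ} (ht : IsKFoldTranslativeTiling P x k) (v d : ℝ × ℝ)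
    (H : ∀ q ∈ P, q ∉ interior P → ¬ Inward P q d → ∀ ε : ℝ, 0 < ε → q + ε • d ∉ P) :
    k = {i | v - x i ∈ interior P}.ncard +
      {i | v - x i ∈ P ∧ v - x i ∉ interior P ∧ Inward P (v - x i) d}.ncard := by
  obtain ⟨hfin, hcov, hpack⟩ := ht
  obtain ⟨R, hR⟩ := hcomp.isBounded.exists_norm_le
  set I : Set ι := {i | ‖x i‖ ≤ ‖v‖ + ‖d‖ + R} with hI
  have hIfin : I.Finite := hfin _
  have hIin : ∀ ε : ℝ, 0 ≤ ε → ε ≤ 1 → ∀ i, v - x i + ε • d ∈ P → i ∈ I := by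
    intro ε h0 h1 i hi
    have h2 := hR _ hi
    have h3 : x i = v + ε • d - (v - x i + ε • d) := by abel
    have h4 : ‖ε • d‖ ≤ ‖d‖ := by
      rw [norm_smul, Real.norm_of_nonneg h0]
      exact mul_le_of_le_one_left (norm_nonneg _) h1
    show ‖x i‖ ≤ _
    rw [h3]
    calc _ ≤ ‖v + ε • d‖ + ‖(v - x i + ε • d)‖ := norm_sub_le _ _
      _ ≤ ‖v‖ + ‖ε • d‖ + R := add_le_add (norm_add_le _ _) h2
      _ ≤ _ := by linarith
  set A : Set ι := {i | v - x i ∈ interior P} with hA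
  set B : Set ι := {i | v - x i ∈ P ∧ v - x i ∉ interior P ∧ Inward P (v - x i) d} with hB
  have hAI : A ⊆ I := fun i hi => hIin 0 le_rfl zero_le_one i (by simpa using interior_subset hi)
  have hBI : B ⊆ I := fun i hi => hIin 0 le_rfl zero_le_one i (by simpa using hi.1)
  have hdisj : Disjoint A B := by
    rw [Set.disjoint_left]
    intro i h1 h2
    exact h2.2.1 h1
  have hev : ∀ᶠ ε : ℝ in 𝓝[>] 0, ∀ i ∈ I,
      (i ∈ A ∪ B → v - x i + ε • d ∈ interior P) ∧ (i ∉ A ∪ B → v - x i + ε • d ∉ P) := by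
    rw [eventually_all_finite hIfin]
    intro i _
    have hcont : Tendsto (fun ε : ℝ => v - x i + ε • d) (𝓝[>] 0) (𝓝 (v - x i)) := by
      have : Continuous (fun ε : ℝ => v - x i + ε • d) := by fun_prop
      have h2 := this.tendsto 0
      simp only [zero_smul, add_zero] at h2
      exact h2.mono_left nhdsWithin_le_nhds
    by_cases hiA : i ∈ A
    · filter_upwards [hcont.eventually (isOpen_interior.mem_nhds hiA)] with ε hε
      exact ⟨fun _ => hε, fun h => absurd (Or.inl hiA) h⟩
    by_cases hiP : v - x i ∈ P
    · by_cases hiB : Inward P (v - x i) d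
      · filter_upwards [inward_eventually hcP hiP hiB] with ε hε
        exact ⟨fun _ => hε, fun h => absurd (Or.inr ⟨hiP, hiA, hiB⟩) h⟩
      · filter_upwards [self_mem_nhdsWithin] with ε hε
        refine ⟨fun h => ?_, fun _ => H _ hiP hiA hiB ε hε⟩
        rcases h with h | h
        · exact absurd h hiA
        · exact absurd h.2.2 hiB
    · filter_upwards [hcont.eventually (hcomp.isClosed.isOpen_compl.mem_nhds hiP)] with ε hε
      refine ⟨fun h => ?_, fun _ => hε⟩
      rcases h with h | h
      · exact absurd h hiA
      · exact absurd h.1 hiP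
  obtain ⟨ε, hε, hε0⟩ := (hev.and (Ioc_mem_nhdsGT (zero_lt_one (α := ℝ)))).exists
  have hABfin : (A ∪ B).Finite := hIfin.subset (Set.union_subset hAI hBI)
  rw [← Set.ncard_union_eq hdisj (hIfin.subset hAI) (hIfin.subset hBI)]
  have hre : ∀ i, v + ε • d - x i = v - x i + ε • d := fun i => by abel
  apply le_antisymm
  · obtain ⟨s, hs, hs2⟩ := hcov (v + ε • d)
    refine hs.trans ?_
    rw [← Set.ncard_coe_finset]
    refine Set.ncard_le_ncard ?_ hABfin
    intro i hi
    have h1 := hs2 i hi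
    rw [hre] at h1
    by_contra hc
    exact (hε i (hIin ε hε0.1.le hε0.2 i h1)).2 hc h1
  · rw [Set.ncard_eq_toFinset_card _ hABfin]
    apply hpack (v + ε • d)
    intro i hi
    rw [hre]
    rw [Set.Finite.mem_toFinset] at hi
    exact (hε i (Set.union_subset hAI hBI hi)).1 hi

/-- Structure of inward directions for a functional with unique max `w`, unique min `w'`. -/
lemma exists_dir {P : Set (ℝ × ℝ)} (hcP : Convex ℝ P) (hint : (interior P).Nonempty)
    (f : (ℝ × ℝ) →L[ℝ] ℝ) {w w' : ℝ × ℝ} (hw : w ∈ P) (hw' : w' ∈ P) (hlt : f w' < f w)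
    (hmax : ∀ p ∈ P, p ≠ w → f p < f w) (hmin : ∀ p ∈ P, p ≠ w' → f w' < f p) :
    ∃ d : ℝ × ℝ, (∀ ε : ℝ, 0 < ε → w + ε • d ∉ P ∧ w + ε • (-d) ∉ P ∧
        w' + ε • d ∉ P ∧ w' + ε • (-d) ∉ P) ∧
      ∀ q ∈ P, q ∉ interior P → q ≠ w → q ≠ w' → Inward P q d ∨ Inward P q (-d) := by
  set A := f (1, 0) with hA
  set B := f (0, 1) with hB
  have hAB : 0 < A ^ 2 + B ^ 2 := by
    have h1 := hlt
    rw [clm_apply f w, clm_apply f w', ← hA, ← hB] at h1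
    by_contra hc
    have hA0 : A = 0 := by nlinarith [sq_nonneg A, sq_nonneg B]
    have hB0 : B = 0 := by nlinarith [sq_nonneg A, sq_nonneg B]
    rw [hA0, hB0] at h1
    simp at h1
  have hd : (-B, A) ≠ (0 : ℝ × ℝ) := by
    intro h
    have h1 : -B = 0 := congrArg Prod.fst h
    have h2 : A = 0 := congrArg Prod.snd h
    have h3 : B = 0 := by linarith
    rw [h2, h3] at hAB
    simp at hAB
  have hfd : f (-B, A) = 0 := by rw [clm_apply, ← hA, ← hB]; ring
  refine ⟨(-B, A), ?_, ?_⟩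
  · have gen : ∀ ε : ℝ, 0 < ε → ∀ e : ℝ × ℝ, e ≠ 0 → f e = 0 → w + ε • e ∉ P ∧ w' + ε • e ∉ P := by
      intro ε hε e he hfe
      have hne : ε • e ≠ 0 := smul_ne_zero hε.ne' he
      constructor
      · intro h
        have := hmax _ h (by simpa using hne)
        simp [hfe] at this
      · intro h
        have := hmin _ h (by simpa using hne)
        simp [hfe] at this
    intro ε hε
    have h1 := gen ε hε _ hd hfd
    have h2 := gen ε hε (-(-B, A)) (neg_ne_zero.2 hd) (by rw [map_neg, hfd, neg_zero])
    exact ⟨h1.1, h2.1, h1.2, h2.2⟩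
  · intro q hq hqi hqw hqw'
    have h1 := hmax q hq hqw
    have h2 := hmin q hq hqw'
    obtain ⟨o, ho⟩ := hint
    have hp : ∃ p ∈ interior P, f p = f q := by
      have seg : ∀ u ∈ P, (f o < f q ∧ f q < f u ∨ f u < f q ∧ f q < f o) →
          ∃ p ∈ interior P, f p = f q := by
        intro u hu hh
        have hne : f u - f o ≠ 0 := by
          rcases hh with h | h
          · intro h0; linarith [h.1, h.2]
          · intro h0; linarith [h.1, h.2]
        refine ⟨((f u - f q) / (f u - f o)) • o + ((f q - f o) / (f u - f o)) • u,
          hcP.openSegment_interior_self_subset_interior ho hu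
            ⟨_, _, ?_, ?_, ?_, rfl⟩, ?_⟩
        · rcases hh with h | h
          · exact div_pos (by linarith) (by linarith)
          · exact div_pos_of_neg_of_neg (by linarith) (by linarith)
        · rcases hh with h | h
          · exact div_pos (by linarith) (by linarith)
          · exact div_pos_of_neg_of_neg (by linarith) (by linarith)
        · field_simp; ring
        · simp only [map_add, map_smul, smul_eq_mul]
          field_simp; ring
      rcases lt_trichotomy (f o) (f q) with h | h | h
      · exact seg w hw (Or.inl ⟨h, h1⟩)
      · exact ⟨o, ho, h⟩
      · exact seg w' hw' (Or.inr ⟨h2, h⟩)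
    obtain ⟨p, hpi, hpq⟩ := hp
    rw [clm_apply f p, clm_apply f q, ← hA, ← hB] at hpq
    have hpeq : q + ((A * (p.2 - q.2) - B * (p.1 - q.1)) / (A ^ 2 + B ^ 2)) • (-B, A) = p := by
      ext
      · simp
        field_simp
        linear_combination (-A) * hpq
      · simp
        field_simp
        linear_combination (-B) * hpq
    set t := (A * (p.2 - q.2) - B * (p.1 - q.1)) / (A ^ 2 + B ^ 2) with hT
    rcases lt_trichotomy t 0 with h | h | h
    · right
      refine ⟨-t, by linarith, ?_⟩
      rw [neg_smul_neg, hpeq]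
      exact hpi
    · rw [h] at hpeq
      simp at hpeq
      exact absurd (hpeq ▸ hpi) hqi
    · left
      exact ⟨t, h, hpeq ▸ hpi⟩

lemma vertex_count {P : Set (ℝ × ℝ)} {V : Finset (ℝ × ℝ)} (hP : IsConvexPolygon P V)
    {c : ℝ × ℝ} (hc : ∀ p ∈ P, 2 • c - p ∈ P) (hcard : 1 < V.card)
    {k : ℕ} {ι : Type}
    {x : ι → ℝ × ℝ} (ht : IsKFoldTranslativeTiling P x k) (v : ℝ × ℝ) {w : ℝ × ℝ} (hw : w ∈ V) :
    2 * k + {i | v - x i = w}.ncard + {i | v - x i = 2 • c - w}.ncard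
      = 2 * {i | v - x i ∈ interior P}.ncard +
      {i | v - x i ∈ P ∧ v - x i ∉ interior P}.ncard := by
  obtain ⟨f, hf⟩ := exists_functional hP hw
  obtain ⟨hPV, hext, hint⟩ := hP
  have hcP : Convex ℝ P := hPV ▸ convex_convexHull ℝ _
  have hVP : (V : Set (ℝ × ℝ)) ⊆ P := hPV ▸ subset_convexHull ℝ _
  have hcomp : IsCompact P := hPV ▸ V.finite_toSet.isCompact_convexHull ℝ
  set w' := 2 • c - w with hw'def
  have hwP : w ∈ P := hVP hw
  have hw'P : w' ∈ P := hc w hwP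
  have hmin : ∀ p ∈ P, p ≠ w' → f w' < f p := by
    intro p hp hne
    have h1 := hf _ (hc p hp) (by
      intro h
      apply hne
      rw [hw'def, ← h]; abel)
    have h2 : f w' = f (2 • c) - f w := by rw [hw'def, map_sub]
    rw [map_sub] at h1
    linarith
  have hne : w' ≠ w := by
    intro h
    obtain ⟨u, hu, huw⟩ := Finset.exists_mem_ne hcard w
    have h1 := hf u (hVP hu) huw
    have h2 := hmin u (hVP hu) (h ▸ huw)
    rw [h] at h2
    linarith
  obtain ⟨d, hd1, hd2⟩ := exists_dir hcP hint f hwP hw'P (hf _ hw'P hne) hf hmin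
  have noIn : ∀ e : ℝ × ℝ, ∀ q, (∀ ε : ℝ, 0 < ε → q + ε • e ∉ P) → ¬ Inward P q e :=
    fun e q h ⟨t, h0, h1⟩ => h t h0 (interior_subset h1)
  have nin : ∀ q : ℝ × ℝ, (∀ ε : ℝ, 0 < ε → q + ε • d ∉ P) → q ∉ interior P := by
    intro q h hq
    have hcont : Tendsto (fun ε : ℝ => q + ε • d) (𝓝[>] 0) (𝓝 q) := by
      have : Continuous (fun ε : ℝ => q + ε • d) := by fun_prop
      have h2 := this.tendsto 0
      simp only [zero_smul, add_zero] at h2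
      exact h2.mono_left nhdsWithin_le_nhds
    obtain ⟨ε, h1, h2⟩ := ((hcont.eventually (isOpen_interior.mem_nhds hq)).and
      self_mem_nhdsWithin).exists
    exact h ε h2 (interior_subset h1)
  have hwi := nin w fun ε h => (hd1 ε h).1
  have hw'i := nin w' fun ε h => (hd1 ε h).2.2.1
  have c1 := count hcP hcomp ht v d (by
    intro q hq hqi hnot ε hε
    by_cases h1 : q = w
    · rw [h1]; exact (hd1 ε hε).1
    by_cases h2 : q = w'
    · rw [h2]; exact (hd1 ε hε).2.2.1
    exact not_mem_of_inward_neg hcP hqi ((hd2 q hq hqi h1 h2).resolve_left hnot) hε)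
  have c2 := count hcP hcomp ht v (-d) (by
    intro q hq hqi hnot ε hε
    by_cases h1 : q = w
    · rw [h1]; exact (hd1 ε hε).2.1
    by_cases h2 : q = w'
    · rw [h2]; exact (hd1 ε hε).2.2.2
    exact not_mem_of_inward_neg hcP hqi
      (by rw [neg_neg]; exact (hd2 q hq hqi h1 h2).resolve_right hnot) hε)
  obtain ⟨R, hR⟩ := hcomp.isBounded.exists_norm_le
  have hfin : {i | v - x i ∈ P}.Finite := by
    refine (ht.1 (‖v‖ + R)).subset ?_
    intro i hi
    have h3 : x i = v - (v - x i) := by abel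
    show ‖x i‖ ≤ _
    rw [h3]
    exact (norm_sub_le _ _).trans (by linarith [hR _ hi])
  set B1 := {i | v - x i ∈ P ∧ v - x i ∉ interior P ∧ Inward P (v - x i) d} with hB1
  set B2 := {i | v - x i ∈ P ∧ v - x i ∉ interior P ∧ Inward P (v - x i) (-d)} with hB2
  set N1 := {i | v - x i = w} with hN1
  set N2 := {i | v - x i = w'} with hN2
  have f1 : B1.Finite := hfin.subset fun i hi => hi.1
  have f2 : B2.Finite := hfin.subset fun i hi => hi.1
  have g1 : N1.Finite := hfin.subset fun i hi => by
    show v - x i ∈ P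
    rw [show v - x i = w from hi]; exact hwP
  have g2 : N2.Finite := hfin.subset fun i hi => by
    show v - x i ∈ P
    rw [show v - x i = w' from hi]; exact hw'P
  have hunion : {i | v - x i ∈ P ∧ v - x i ∉ interior P} = (B1 ∪ B2) ∪ (N1 ∪ N2) := by
    ext i
    constructor
    · rintro ⟨h1, h2⟩
      by_cases h3 : v - x i = w
      · exact Or.inr (Or.inl h3)
      by_cases h4 : v - x i = w'
      · exact Or.inr (Or.inr h4)
      rcases hd2 _ h1 h2 h3 h4 with h5 | h5
      · exact Or.inl (Or.inl ⟨h1, h2, h5⟩)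
      · exact Or.inl (Or.inr ⟨h1, h2, h5⟩)
    · rintro ((h | h) | (h | h))
      · exact ⟨h.1, h.2.1⟩
      · exact ⟨h.1, h.2.1⟩
      · rw [hN1, Set.mem_setOf_eq] at h
        rw [Set.mem_setOf_eq, h]; exact ⟨hwP, hwi⟩
      · rw [hN2, Set.mem_setOf_eq] at h
        rw [Set.mem_setOf_eq, h]; exact ⟨hw'P, hw'i⟩
  have d1 : Disjoint B1 B2 := by
    rw [Set.disjoint_left]
    intro i h1 h2
    obtain ⟨t, ht0, ht1⟩ := h1.2.2
    exact not_mem_of_inward_neg hcP h1.2.1 h2.2.2 ht0 (interior_subset ht1)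
  have d2 : Disjoint N1 N2 := by
    rw [Set.disjoint_left]
    intro i h1 h2
    rw [hN1, Set.mem_setOf_eq] at h1
    rw [hN2, Set.mem_setOf_eq] at h2
    exact hne (h2.symm.trans h1)
  have d3 : Disjoint (B1 ∪ B2) (N1 ∪ N2) := by
    rw [Set.disjoint_left]
    rintro i (h1 | h1) (h2 | h2)
    all_goals
      have h3 := h1.2.2
      have h4 : v - x i = _ := h2
      rw [h4] at h3
      revert h3
      apply noIn
      intro ε hε
    · exact (hd1 ε hε).1
    · exact (hd1 ε hε).2.2.1
    · exact (hd1 ε hε).2.1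
    · exact (hd1 ε hε).2.2.2
  rw [hunion, Set.ncard_union_eq d3 (f1.union f2) (g1.union g2), Set.ncard_union_eq d1 f1 f2,
    Set.ncard_union_eq d2 g1 g2]
  omega

lemma reflect_mem {P : Set (ℝ × ℝ)} {V : Finset (ℝ × ℝ)} (hP : IsConvexPolygon P V)
    {c : ℝ × ℝ} (hc : ∀ p ∈ P, 2 • c - p ∈ P) {w : ℝ × ℝ} (hw : w ∈ V) : 2 • c - w ∈ V := by
  obtain ⟨hPV, hext, hint⟩ := hP
  have hVP : (V : Set (ℝ × ℝ)) ⊆ P := hPV ▸ subset_convexHull ℝ _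
  have h : 2 • c - w ∈ Set.extremePoints ℝ P := by
    rw [mem_extremePoints]
    refine ⟨hc w (hVP hw), ?_⟩
    rintro a ha b hb ⟨s, t, hs, ht, hst, he⟩
    have h1 := (mem_extremePoints.1 (hext w hw)).2 _ (hc a ha) _ (hc b hb) ⟨s, t, hs, ht, hst, by
      have h2 : s • (2 • c - a) + t • (2 • c - b) = (s + t) • (2 • c) - (s • a + t • b) := by
        module
      rw [h2, he, hst, one_smul]; abel⟩
    exact ⟨by rw [← h1.1]; abel, by rw [← h1.2]; abel⟩
  rw [hPV] at h
  exact extremePoints_convexHull_subset h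

lemma vertex_interior {P : Set (ℝ × ℝ)} {V : Finset (ℝ × ℝ)} (hP : IsConvexPolygon P V)
    (hcard : 1 < V.card) {w : ℝ × ℝ} (hw : w ∈ V) : w ∉ interior P := by
  intro hwi
  obtain ⟨f, hf⟩ := exists_functional hP hw
  have hVP : (V : Set (ℝ × ℝ)) ⊆ P := hP.1 ▸ subset_convexHull ℝ _
  obtain ⟨u, hu, huw⟩ := Finset.exists_mem_ne hcard w
  have hcont : Tendsto (fun ε : ℝ => w + ε • (w - u)) (𝓝[>] 0) (𝓝 w) := by
    have : Continuous (fun ε : ℝ => w + ε • (w - u)) := by fun_prop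
    have h2 := this.tendsto 0
    simp only [zero_smul, add_zero] at h2
    exact h2.mono_left nhdsWithin_le_nhds
  obtain ⟨ε, h1, h2⟩ := ((hcont.eventually (isOpen_interior.mem_nhds hwi)).and
    self_mem_nhdsWithin).exists
  have h2' : 0 < ε := h2
  have h3 := hf u (hVP hu) huw
  have h4 : w + ε • (w - u) ≠ w := by
    simp [h2'.ne', sub_eq_zero, huw.symm]
  have h5 := hf _ (interior_subset h1) h4
  simp only [map_add, map_smul, map_sub, smul_eq_mul] at h5
  nlinarith [mul_pos h2' (sub_pos.2 h3)]

end PhiAux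

/-- Lemma 2: let `P` be a centrally symmetric convex `2m`-gon and let `P + X` be a
`k`-fold translative tiling of the plane. For a vertex `v ∈ V + X`, writing
`φ(v) = k - #{i : v ∈ int(P) + x i}` and letting `ℓ` be the number of indices `i` such
that `v` lies in the relative interior of some edge of `P + x i`, there is a positive
integer `κ` with `φ(v) = κ (m-1)/2 + ℓ/2`. -/
theorem phi_formula (m : ℕ) (hm : 0 < m)
    (P : Set (ℝ × ℝ)) (V : Finset (ℝ × ℝ))
    (hP : IsConvexPolygon P V) (hV : V.card = 2 * m) (hsym : IsCentrallySymmetric P)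
    (k : ℕ) (hk : 0 < k) (ι : Type) (x : ι → ℝ × ℝ)
    (htile : IsKFoldTranslativeTiling P x k)
    (v : ℝ × ℝ) (j : ι) (hv : v - x j ∈ V) :
    ∃ κ : ℕ, 0 < κ ∧
      (k : ℝ) - ({i : ι | v - x i ∈ interior P}.ncard : ℝ) =
        (κ : ℝ) * ((m : ℝ) - 1) / 2 +
          (({i : ι | ∃ a b : ℝ × ℝ, IsEdge P V a b ∧
            v - x i ∈ openSegment ℝ a b}.ncard : ℝ)) / 2 := by
  classical
  obtain ⟨c, hc⟩ := hsym
  have hcard : 1 < V.card := by omega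
  obtain ⟨hPV, hext, hint⟩ := id hP
  have hVP : (V : Set (ℝ × ℝ)) ⊆ P := hPV ▸ subset_convexHull ℝ _
  have hcomp : IsCompact P := hPV ▸ V.finite_toSet.isCompact_convexHull ℝ
  obtain ⟨R, hR⟩ := hcomp.isBounded.exists_norm_le
  have hfin : {i | v - x i ∈ P}.Finite := by
    refine (htile.1 (‖v‖ + R)).subset ?_
    intro i hi
    have h3 : x i = v - (v - x i) := by abel
    show ‖x i‖ ≤ _
    rw [h3]
    exact (norm_sub_le _ _).trans (by linarith [hR _ hi])
  have hVi : ∀ w ∈ V, w ∉ interior P := by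
    intro w hw hwi
    have h1 := PhiAux.vertex_interior hP hcard hw
    exact h1 hwi
  set n : ℝ × ℝ → ℕ := fun w => {i | v - x i = w}.ncard with hn
  set L := {i : ι | ∃ a b : ℝ × ℝ, IsEdge P V a b ∧ v - x i ∈ openSegment ℝ a b} with hL
  set Bd := {i | v - x i ∈ P ∧ v - x i ∉ interior P} with hBd
  have hvc : ∀ w ∈ V, 2 * k + n w + n (2 • c - w) =
      2 * {i | v - x i ∈ interior P}.ncard + Bd.ncard :=
    fun w hw => PhiAux.vertex_count hP hc hcard htile v hw
  have hT : Bd.ncard = L.ncard + ∑ w ∈ V, n w := by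
    have e1 : Bd = L ∪ {i | v - x i ∈ V} := by
      ext i
      constructor
      · rintro ⟨h1, h2⟩
        by_cases h3 : v - x i ∈ V
        · exact Or.inr h3
        · exact Or.inl (PhiAux.frontier_edge hP h1 h2 h3)
      · rintro (⟨a, b, h1, h2⟩ | h)
        · have := PhiAux.edge_frontier hP h1 h2
          exact ⟨this.1, this.2.1⟩
        · exact ⟨hVP h, hVi _ h⟩
    have dis : Disjoint L {i | v - x i ∈ V} := by
      rw [Set.disjoint_left]
      rintro i ⟨a, b, h1, h2⟩ h3
      exact (PhiAux.edge_frontier hP h1 h2).2.2 h3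
    have fL : L.Finite := hfin.subset fun i ⟨a, b, h1, h2⟩ => (PhiAux.edge_frontier hP h1 h2).1
    have fV : {i | v - x i ∈ V}.Finite := hfin.subset fun i hi => hVP hi
    rw [e1, Set.ncard_union_eq dis fL fV]
    congr 1
    rw [Set.ncard_eq_toFinset_card _ fV,
      Finset.card_eq_sum_card_fiberwise (f := fun i => v - x i) (t := V)
        (fun i hi => by simpa using hi)]
    refine Finset.sum_congr rfl fun w hw => ?_
    rw [hn, ← Set.ncard_coe_finset]
    congr 1
    ext i
    simp only [Finset.coe_filter, Set.Finite.mem_toFinset, Set.mem_setOf_eq]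
    constructor
    · exact fun h => h.2
    · exact fun h => ⟨h ▸ hw, h⟩
  have hsum : ∑ w ∈ V, n (2 • c - w) = ∑ w ∈ V, n w := by
    refine Finset.sum_bij' (fun w _ => 2 • c - w) (fun w _ => 2 • c - w)
      (fun w hw => PhiAux.reflect_mem hP hc hw) (fun w hw => PhiAux.reflect_mem hP hc hw)
      (fun w _ => by simp) (fun w _ => by simp) (fun w _ => rfl)
  refine ⟨n (v - x j) + n (2 • c - (v - x j)), ?_, ?_⟩
  · have : 0 < n (v - x j) := by
      rw [hn]
      refine (Set.ncard_pos (hfin.subset ?_)).2 ⟨j, rfl⟩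
      intro i hi
      show v - x i ∈ P
      rw [show v - x i = v - x j from hi]
      exact hVP hv
    omega
  · set κ := n (v - x j) + n (2 • c - (v - x j)) with hκ
    have hall : ∀ w ∈ V, n w + n (2 • c - w) = κ := by
      intro w hw
      have h1 := hvc w hw
      have h2 := hvc _ hv
      omega
    have h1 := Finset.sum_congr rfl hall
    rw [Finset.sum_add_distrib, hsum, Finset.sum_const, hV, smul_eq_mul] at h1
    have h2 := hvc _ hv
    rw [hT] at h2
    have h3 : ((∑ w ∈ V, n w : ℕ) : ℝ) = m * κ := by
      have : (∑ w ∈ V, n w) = m * κ := by nlinarith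
      rw [this]; push_cast; ring
    have h4 : (2 * k + κ : ℝ) = 2 * ({i | v - x i ∈ interior P}.ncard : ℝ) +
        (L.ncard + ((∑ w ∈ V, n w : ℕ) : ℝ)) := by
      rw [hκ]
      exact_mod_cast (by omega)
    rw [h3] at h4
    linarith
end
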